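/- arXiv:0812.4105 — 2 statements merged into one kernel-verified Lean document; each statement's English description precedes it below -/
import Mathlib

section
/- Let X ~ F and Z ~ Beta(a, b) (a, b > 0) be independent random variables with F(0) = 0 and upper endpoint x_F ∈ {1, ∞}, and let Y := X (1 − δZ)^τ with δ ∈ (0, 1] and τ ∈ (0, ∞). If F ∈ MDA(Λ, w) for a positive scaling function w, then P(Y > u) = (1+o(1)) (Γ(a+b)/Γ(b)) · (δτ u w(u))^{−a} · (1 − F(u)) as u ↑ x_F. -/
open MeasureTheory Filter Topology Matrix ProbabilityTheory

noncomputable section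

/-- The Euclidean norm of a vector in `ℝ^d`. -/
def eNorm {d : ℕ} (x : Fin d → ℝ) : ℝ := Real.sqrt (∑ i, x i ^ 2)

/-- `U` is uniformly distributed on the unit sphere of `ℝ^d`: it takes values in the unit
sphere and its distribution is invariant under orthogonal transformations. -/
def IsUniformOnSphere {Ω : Type*} [MeasurableSpace Ω] (P : Measure Ω) {d : ℕ}
    (U : Ω → Fin d → ℝ) : Prop :=
  Measurable U ∧ (∀ ω, eNorm (U ω) = 1) ∧
    ∀ D : Matrix (Fin d) (Fin d) ℝ, D * Dᵀ = 1 →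
      P.map (fun ω => D.mulVec (U ω)) = P.map U

/-- The density of the Beta distribution with parameters `a, b`. -/
def betaPDF (a b x : ℝ) : ℝ :=
  if 0 < x ∧ x < 1 then
    x ^ (a - 1) * (1 - x) ^ (b - 1) * (Real.Gamma (a + b) / (Real.Gamma a * Real.Gamma b))
  else 0

/-!
Write `G = 1 - F`. Conditioning on `Z` gives `P(Y > u) = E[G(u (1 - δ Z) ^ (-τ))]`. After the
substitution `z = s / (δ τ u w(u))` the argument of `G` is `u + (s + o(1)) / w(u)`, so the ratio to
`G(u)` tends to `exp (-s)`, while the density of `Z` contributes `c s ^ (a - 1)`. The integral is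
thus asymptotic to `c Γ(a) (δ τ u w(u)) ^ (-a) G(u)`, with `c Γ(a) = Γ(a + b) / Γ(b)` for the Beta
law.

Dominated convergence needs `G(u + s / w(u)) / G(u) ≤ C (1 + s) ^ (-p)` uniformly in `u`. Near the
endpoint one step `u ↦ u + 1 / w(u)` at least halves `G` but increases `1 / w` by a factor of at
most `1 + ε`. So `n` steps divide `G` by `2 ^ n` and move `u` by only `O((1 + ε) ^ n / w(u))`, and
`ε` may be taken as small as `p` requires.
-/

/-- The filter `u ↑ x`, where `x ≤ ∞` is the upper endpoint of the antitone tail function `G`. It is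
generated by the sets `{u | U ≤ u ∧ 0 < G u}` with `0 < G U`, which makes `x = ∞` and `x < ∞` one
case. -/
def upperEndpointFilter (G : ℝ → ℝ) : Filter ℝ :=
  map ((↑) : {u | 0 < G u} → ℝ) atTop

section UpperEndpoint

variable {G : ℝ → ℝ}

lemma eventually_upperEndpointFilter (hG : ∃ u, 0 < G u) {p : ℝ → Prop} :
    (∀ᶠ u in upperEndpointFilter G, p u) ↔ ∃ U, 0 < G U ∧ ∀ u, U ≤ u → 0 < G u → p u := by
  have : Nonempty {u | 0 < G u} := nonempty_subtype.2 hG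
  rw [upperEndpointFilter, eventually_map, eventually_atTop]
  exact ⟨fun ⟨U, hU⟩ => ⟨U, U.2, fun u hUu hu => hU ⟨u, hu⟩ hUu⟩,
    fun ⟨U, hU, h⟩ => ⟨⟨U, hU⟩, fun u hUu => h u hUu u.2⟩⟩

lemma upperEndpointFilter_eq_atTop (hG : ∀ u, 0 < G u) : upperEndpointFilter G = atTop :=
  map_val_atTop_of_Ici_subset (a := 0) fun u _ => hG u

lemma upperEndpointFilter_eq_nhdsLT {x : ℝ} (hG : ∀ u, 0 < G u ↔ u < x) :
    upperEndpointFilter G = 𝓝[<] x := by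
  have hset : {u | 0 < G u} = Set.Iio x := Set.ext hG
  rw [upperEndpointFilter, hset]
  exact map_coe_Iio_atTop x

lemma isCountablyGenerated_upperEndpointFilter (hG : Antitone G) :
    (upperEndpointFilter G).IsCountablyGenerated := by
  have : {u | 0 < G u}.OrdConnected :=
    IsLowerSet.ordConnected fun _ _ hle hpos => hpos.trans_le (hG hle)
  unfold upperEndpointFilter
  infer_instance

end UpperEndpoint

/-- The tail function `G = 1 - F` of a distribution `F ∈ MDA(Λ, w)`. Neither the normalization
`G → 1` at `-∞` nor the sign of `w` is prescribed. -/
structure IsGumbelTail (G w : ℝ → ℝ) : Prop where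
  antitone : Antitone G
  nonneg : ∀ u, 0 ≤ G u
  exists_pos : ∃ u, 0 < G u
  tendsto_ratio : ∀ x : ℝ,
    Tendsto (fun u => G (u + x / w u) / G u) (upperEndpointFilter G) (𝓝 (Real.exp (-x)))

/-- The point one unit of the local scale `1 / w u` above `u`. Its iterates carry the tail estimate
`IsGumbelTail.eventually_ratio_le_rpow`. -/
def scaleStep (w : ℝ → ℝ) (u : ℝ) : ℝ := u + 1 / w u

namespace IsGumbelTail

variable {G w : ℝ → ℝ} (hG : IsGumbelTail G w)
include hG

lemma eventually_pos : ∀ᶠ u in upperEndpointFilter G, 0 < G u := by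
  obtain ⟨U, hU⟩ := hG.exists_pos
  exact (eventually_upperEndpointFilter hG.exists_pos).2 ⟨U, hU, fun _ _ hu => hu⟩

lemma eventually_scale_pos : ∀ᶠ u in upperEndpointFilter G, 0 < w u := by
  have hlt : Real.exp (-1) < 1 := by simp
  filter_upwards [(hG.tendsto_ratio 1).eventually_lt_const hlt, hG.eventually_pos]
    with u hratio hpos
  by_contra! hw
  have hle : u + 1 / w u ≤ u := by linarith [one_div_nonpos.2 hw]
  exact hratio.not_ge ((one_le_div hpos).2 (hG.antitone hle))

lemma tendsto_ratio_of_tendsto {x : ℝ → ℝ} {s : ℝ} (hx : Tendsto x (upperEndpointFilter G) (𝓝 s)) :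
    Tendsto (fun u => G (u + x u / w u) / G u) (upperEndpointFilter G) (𝓝 (Real.exp (-s))) := by
  have hcont : Continuous fun y : ℝ => Real.exp (-y) := by fun_prop
  refine tendsto_order.2 ⟨fun c hc => ?_, fun c hc => ?_⟩
  · have hnear := (hcont.continuousWithinAt (s := Set.Ioi s)).eventually_const_lt hc
    obtain ⟨y, hcy, hsy⟩ := (hnear.and self_mem_nhdsWithin).exists
    filter_upwards [(hG.tendsto_ratio y).eventually_const_lt hcy, hx.eventually_lt_const hsy,
      hG.eventually_scale_pos] with u hratio hxy hw
    refine hratio.trans_le (div_le_div_of_nonneg_right (hG.antitone ?_) (hG.nonneg u))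
    gcongr
  · have hnear := (hcont.continuousWithinAt (s := Set.Iio s)).eventually_lt_const hc
    obtain ⟨y, hcy, hsy⟩ := (hnear.and self_mem_nhdsWithin).exists
    filter_upwards [(hG.tendsto_ratio y).eventually_lt_const hcy, hx.eventually_const_lt hsy,
      hG.eventually_scale_pos] with u hratio hxy hw
    refine (div_le_div_of_nonneg_right (hG.antitone ?_) (hG.nonneg u)).trans_lt hratio
    gcongr

lemma eventually_scaleStep_pos : ∀ᶠ u in upperEndpointFilter G, 0 < G (scaleStep w u) := by
  filter_upwards [(hG.tendsto_ratio 1).eventually_const_lt (Real.exp_pos _), hG.eventually_pos]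
    with u hratio hpos
  exact (div_pos_iff_of_pos_right hpos).1 hratio

lemma eventually_scaleStep_le_half :
    ∀ᶠ u in upperEndpointFilter G, G (scaleStep w u) ≤ 1 / 2 * G u := by
  have hlt : Real.exp (-1) < 1 / 2 := by simpa using Real.exp_neg_one_lt_half
  filter_upwards [(hG.tendsto_ratio 1).eventually_lt_const hlt, hG.eventually_pos]
    with u hratio hpos
  exact ((div_lt_iff₀ hpos).1 hratio).le

lemma eventually_forall_iterate_scaleStep {p : ℝ → Prop}
    (hp : ∀ᶠ u in upperEndpointFilter G, p u) :
    ∀ᶠ u in upperEndpointFilter G, ∀ n : ℕ, p ((scaleStep w)^[n] u) := by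
  obtain ⟨U, hU, hgood⟩ := (eventually_upperEndpointFilter hG.exists_pos).1
    (hp.and (hG.eventually_scaleStep_pos.and hG.eventually_scale_pos))
  refine (eventually_upperEndpointFilter hG.exists_pos).2 ⟨U, hU, fun u hUu hu n => ?_⟩
  have hinv : U ≤ (scaleStep w)^[n] u ∧ 0 < G ((scaleStep w)^[n] u) := by
    induction n with
    | zero => exact ⟨hUu, hu⟩
    | succ n ih =>
      obtain ⟨-, hpos, hw⟩ := hgood _ ih.1 ih.2
      rw [Function.iterate_succ_apply']
      exact ⟨ih.1.trans (le_add_of_nonneg_right (one_div_pos.2 hw).le), hpos⟩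
  exact (hgood _ hinv.1 hinv.2).1

lemma tendsto_scaleStep :
    Tendsto (scaleStep w) (upperEndpointFilter G) (upperEndpointFilter G) := fun _ hs =>
  (hG.eventually_forall_iterate_scaleStep hs).mono fun _ h => h 1

lemma eventually_one_div_scale_scaleStep_le {ε : ℝ} (hε : 0 < ε) :
    ∀ᶠ u in upperEndpointFilter G, 1 / w (scaleStep w u) ≤ (1 + ε) * (1 / w u) := by
  obtain ⟨m, hεm, hm⟩ : ∃ m, Real.exp (-(1 + ε)) < m ∧ m < Real.exp (-1) :=
    exists_between (Real.exp_lt_exp.2 (by linarith))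
  have hratio : Tendsto (fun u => G (u + (2 + ε) / w u) / G (scaleStep w u))
      (upperEndpointFilter G) (𝓝 (Real.exp (-(1 + ε)))) := by
    have hexp : Real.exp (-(2 + ε)) / Real.exp (-1) = Real.exp (-(1 + ε)) := by
      rw [← Real.exp_sub]
      ring_nf
    rw [← hexp]
    refine ((hG.tendsto_ratio (2 + ε)).div (hG.tendsto_ratio 1) (Real.exp_pos _).ne').congr' ?_
    filter_upwards [hG.eventually_pos] with u hpos
    exact div_div_div_cancel_right₀ hpos.ne' _ _
  filter_upwards [hratio.eventually_lt_const hεm, hG.eventually_scaleStep_pos,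
    ((hG.tendsto_ratio 1).comp hG.tendsto_scaleStep).eventually_const_lt hm] with u hlt hpos hgt
  by_contra! hw
  refine (hlt.trans hgt).not_ge (div_le_div_of_nonneg_right (hG.antitone ?_) hpos.le)
  calc u + (2 + ε) / w u = scaleStep w u + (1 + ε) * (1 / w u) := by rw [scaleStep]; ring
    _ ≤ scaleStep w u + 1 / w (scaleStep w u) := by gcongr

lemma eventually_iterate_scaleStep_le_half_pow :
    ∀ᶠ u in upperEndpointFilter G, ∀ n : ℕ, G ((scaleStep w)^[n] u) ≤ (1 / 2) ^ n * G u := by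
  filter_upwards [hG.eventually_forall_iterate_scaleStep hG.eventually_scaleStep_le_half]
    with u hhalf n
  induction n with
  | zero => simp
  | succ n ih =>
    rw [Function.iterate_succ_apply', pow_succ', mul_assoc]
    exact (hhalf n).trans (by gcongr)

lemma eventually_iterate_scaleStep_le {ε : ℝ} (hε : 0 < ε) :
    ∀ᶠ u in upperEndpointFilter G, ∀ n : ℕ,
      (scaleStep w)^[n] u ≤ u + ((1 + ε) ^ n - 1) / ε * (1 / w u) := by
  filter_upwards
    [hG.eventually_forall_iterate_scaleStep (hG.eventually_one_div_scale_scaleStep_le hε)]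
    with u hscale n
  have hgrowth (n : ℕ) : 1 / w ((scaleStep w)^[n] u) ≤ (1 + ε) ^ n * (1 / w u) := by
    induction n with
    | zero => simp
    | succ n ih =>
      rw [Function.iterate_succ_apply', pow_succ', mul_assoc]
      exact (hscale n).trans (by gcongr)
  induction n with
  | zero => simp
  | succ n ih =>
    rw [Function.iterate_succ_apply']
    calc scaleStep w ((scaleStep w)^[n] u)
        ≤ u + ((1 + ε) ^ n - 1) / ε * (1 / w u) + (1 + ε) ^ n * (1 / w u) :=
          add_le_add ih (hgrowth n)
      _ = u + ((1 + ε) ^ (n + 1) - 1) / ε * (1 / w u) := by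
          field_simp
          ring

lemma neBot_upperEndpointFilter : (upperEndpointFilter G).NeBot := by
  have : Nonempty {u | 0 < G u} := nonempty_subtype.2 hG.exists_pos
  unfold upperEndpointFilter
  infer_instance

lemma tendsto_zero : Tendsto G (upperEndpointFilter G) (𝓝 0) := by
  have := hG.neBot_upperEndpointFilter
  obtain ⟨u, hhalf, hpos⟩ := (hG.eventually_iterate_scaleStep_le_half_pow.and
    (hG.eventually_forall_iterate_scaleStep hG.eventually_pos)).exists
  have hlim : Tendsto (fun n : ℕ => (1 / 2 : ℝ) ^ n * G u) atTop (𝓝 0) := by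
    simpa using (tendsto_pow_atTop_nhds_zero_of_lt_one (r := (1 / 2 : ℝ)) (by norm_num)
      (by norm_num)).mul_const (G u)
  refine tendsto_order.2 ⟨fun c hc => .of_forall fun x => hc.trans_le (hG.nonneg x), fun c hc => ?_⟩
  obtain ⟨n, hn⟩ := (hlim.eventually_lt_const hc).exists
  exact (eventually_upperEndpointFilter hG.exists_pos).2
    ⟨(scaleStep w)^[n] u, hpos n, fun x hx _ => ((hG.antitone hx).trans (hhalf n)).trans_lt hn⟩

lemma tendsto_sub_mul_scale_atTop {v : ℝ} (hv : 0 < G v) :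
    Tendsto (fun u => (u - v) * w u) (upperEndpointFilter G) atTop := by
  refine tendsto_atTop.2 fun M => ?_
  have hlim : Tendsto (fun u => G (u + -M / w u)) (upperEndpointFilter G) (𝓝 0) := by
    have hmul := (hG.tendsto_ratio (-M)).mul hG.tendsto_zero
    rw [mul_zero] at hmul
    refine hmul.congr' ?_
    filter_upwards [hG.eventually_pos] with u hpos
    exact div_mul_cancel₀ _ hpos.ne'
  filter_upwards [hlim.eventually_lt_const hv, hG.eventually_scale_pos] with u hlt hw
  by_contra! hM
  have hle : u + -M / w u ≤ v := by
    have := (lt_div_iff₀ hw).2 hM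
    rw [neg_div]
    linarith
  exact hlt.not_ge (hG.antitone hle)

lemma eventually_gt {v : ℝ} (hv : 0 < G v) : ∀ᶠ u in upperEndpointFilter G, v < u := by
  filter_upwards [(hG.tendsto_sub_mul_scale_atTop hv).eventually_gt_atTop 0,
    hG.eventually_scale_pos] with u hmul hw
  exact sub_pos.1 (pos_of_mul_pos_left hmul hw.le)

lemma eventually_ratio_le_rpow {p : ℝ} (hp : 0 < p) :
    ∃ C, ∀ᶠ u in upperEndpointFilter G, ∀ s, 0 ≤ s →
      G (u + s / w u) / G u ≤ C * (1 + s) ^ (-p) := by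
  -- `G` halves while `1 + ε s` grows by a factor `1 + ε`, so any `ε` with `(1 + ε) ^ p < 2` does.
  obtain ⟨ε, hε2, hε0, hε1⟩ : ∃ ε : ℝ, (1 + ε) ^ p < 2 ∧ 0 < ε ∧ ε < 1 := by
    have hcont : ContinuousAt (fun ε : ℝ => (1 + ε) ^ p) 0 :=
      ContinuousAt.rpow_const (by fun_prop) (Or.inr hp.le)
    have hlt : ∀ᶠ ε in 𝓝[>] (0 : ℝ), (1 + ε) ^ p < 2 :=
      (hcont.eventually_lt_const (by norm_num)).filter_mono nhdsWithin_le_nhds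
    exact (hlt.and (Ioo_mem_nhdsGT one_pos)).exists
  refine ⟨2 * ε ^ (-p), ?_⟩
  filter_upwards [hG.eventually_iterate_scaleStep_le_half_pow,
    hG.eventually_iterate_scaleStep_le hε0, hG.eventually_pos, hG.eventually_scale_pos]
    with u hhalf hiter hpos hw s hs
  obtain ⟨n, hn, hn'⟩ := exists_nat_pow_near (x := 1 + ε * s) (y := 1 + ε)
    (le_add_of_nonneg_right (by positivity)) (by linarith)
  have hle : (scaleStep w)^[n] u ≤ u + s / w u := by
    rw [div_eq_mul_one_div s]
    refine (hiter n).trans ?_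
    gcongr
    rw [div_le_iff₀ hε0]
    linarith
  have hpow : (1 + ε * s) ^ p ≤ 2 ^ (n + 1) :=
    calc (1 + ε * s) ^ p ≤ ((1 + ε) ^ (n + 1)) ^ p := by gcongr
      _ = ((1 + ε) ^ p) ^ (n + 1) := by rw [Real.rpow_pow_comm (by positivity)]
      _ ≤ 2 ^ (n + 1) := by gcongr
  calc G (u + s / w u) / G u ≤ (1 / 2) ^ n :=
        (div_le_iff₀ hpos).2 ((hG.antitone hle).trans (hhalf n))
    _ = 2 * (2 ^ (n + 1))⁻¹ := by rw [pow_succ, one_div, inv_pow]; field_simp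
    _ ≤ 2 * ((1 + ε * s) ^ p)⁻¹ := by gcongr
    _ ≤ 2 * ((ε * (1 + s)) ^ p)⁻¹ := by gcongr; linarith
    _ = 2 * ε ^ (-p) * (1 + s) ^ (-p) := by
        rw [← Real.rpow_neg (by positivity), Real.mul_rpow hε0.le (by positivity), mul_assoc]

end IsGumbelTail

section Watson

variable {ι : Type*} {l : Filter ι} {V : ι → ℝ} {a p C : ℝ}

lemma integrableOn_rpow_mul_one_add_rpow_neg (ha : 0 < a) (hap : a < p) :
    IntegrableOn (fun s : ℝ => s ^ (a - 1) * (1 + s) ^ (-p)) (Set.Ioi 0) := by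
  have hcont : ContinuousOn (fun s : ℝ => (1 + s) ^ (-p)) (Set.Ici 0) :=
    ContinuousOn.rpow_const (by fun_prop) fun s (hs : 0 ≤ s) => Or.inl (by positivity)
  refine mellin_convergent_of_isBigO_scalar (b := 0)
    ((hcont.mono Set.Ioi_subset_Ici_self).locallyIntegrableOn measurableSet_Ioi) ?_ hap ?_ ha
  · refine .of_bound 1 ?_
    filter_upwards [eventually_gt_atTop 0] with s hs
    rw [one_mul, Real.norm_of_nonneg (by positivity), Real.norm_of_nonneg (by positivity)]
    exact Real.rpow_le_rpow_of_nonpos hs (by linarith) (by linarith)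
  · simpa using ((hcont 0 Set.self_mem_Ici).mono Set.Ioi_subset_Ici_self).isBigO_one ℝ

lemma rpow_mul_setIntegral_Ioo {v : ℝ} (hv : 0 < v) (a η : ℝ) (q : ℝ → ℝ) :
    v ^ a * ∫ z in Set.Ioo 0 η, z ^ (a - 1) * q z =
      ∫ s in Set.Ioi 0, s ^ (a - 1) * (Set.Iio η).indicator q (s / v) := by
  have hscale (s : ℝ) (hs : s ∈ Set.Ioi 0) : s ^ (a - 1) * (Set.Iio η).indicator q (s / v) =
      v ^ (a - 1) * ((v⁻¹ * s) ^ (a - 1) * (Set.Iio η).indicator q (v⁻¹ * s)) := by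
    rw [Real.mul_rpow (by positivity) (le_of_lt hs), Real.inv_rpow hv.le, ← mul_assoc, ← mul_assoc,
      mul_inv_cancel₀ (by positivity), one_mul, div_eq_inv_mul]
  have hindicator (z : ℝ) : z ^ (a - 1) * (Set.Iio η).indicator q z =
      (Set.Iio η).indicator (fun z => z ^ (a - 1) * q z) z :=
    (Set.indicator_mul_right _ (fun z => z ^ (a - 1)) q).symm
  rw [setIntegral_congr_fun measurableSet_Ioi hscale, integral_const_mul,
    integral_comp_mul_left_Ioi (fun z => z ^ (a - 1) * (Set.Iio η).indicator q z) 0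
      (inv_pos.2 hv), mul_zero, inv_inv, smul_eq_mul, ← mul_assoc, Real.rpow_sub_one hv.ne',
    div_mul_cancel₀ _ hv.ne']
  simp only [hindicator]
  rw [setIntegral_indicator measurableSet_Iio, Set.Ioi_inter_Iio]

lemma tendsto_rpow_mul_setIntegral_Ioo_rpow_mul [l.IsCountablyGenerated] (hV : Tendsto V l atTop)
    {q : ι → ℝ → ℝ} {k : ℝ → ℝ} {η : ℝ} (ha : 0 < a) (hap : a < p) (hη : 0 < η)
    (hq : ∀ u, Measurable (q u))
    (hbound : ∀ᶠ u in l, ∀ z ∈ Set.Ioo 0 η, |q u z| ≤ C * (1 + V u * z) ^ (-p))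
    (hlim : ∀ s, 0 < s → Tendsto (fun u => q u (s / V u)) l (𝓝 (k s))) :
    Tendsto (fun u => V u ^ a * ∫ z in Set.Ioo 0 η, z ^ (a - 1) * q u z) l
      (𝓝 (∫ s in Set.Ioi 0, s ^ (a - 1) * k s)) := by
  have hVpos : ∀ᶠ u in l, 0 < V u := hV.eventually_gt_atTop 0
  have hrescaled : Tendsto
      (fun u => ∫ s in Set.Ioi 0, s ^ (a - 1) * (Set.Iio η).indicator (q u) (s / V u)) l
      (𝓝 (∫ s in Set.Ioi 0, s ^ (a - 1) * k s)) := by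
    refine tendsto_integral_filter_of_dominated_convergence
      (fun s => |C| * (s ^ (a - 1) * (1 + s) ^ (-p))) (.of_forall fun u => ?_) ?_
      ((integrableOn_rpow_mul_one_add_rpow_neg ha hap).const_mul |C|) ?_
    · have hind := ((hq u).indicator (measurableSet_Iio (a := η))).comp (measurable_div_const (V u))
      exact (Measurable.mul (by fun_prop) hind).aestronglyMeasurable
    · filter_upwards [hbound, hVpos] with u hu hv
      refine (ae_restrict_iff' measurableSet_Ioi).2 (.of_forall fun s (hs : 0 < s) => ?_)
      rw [norm_mul, Real.norm_of_nonneg (Real.rpow_nonneg hs.le _), mul_left_comm]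
      gcongr
      by_cases hsη : s / V u < η
      · rw [Set.indicator_of_mem (Set.mem_Iio.2 hsη), Real.norm_eq_abs]
        have hus := hu (s / V u) ⟨by positivity, hsη⟩
        rw [mul_div_cancel₀ s hv.ne'] at hus
        exact hus.trans (by gcongr; exact le_abs_self C)
      · rw [Set.indicator_of_notMem (mt Set.mem_Iio.1 hsη), norm_zero]
        positivity
    · refine (ae_restrict_iff' measurableSet_Ioi).2 (.of_forall fun s hs => ?_)
      refine ((hlim s hs).congr' ?_).const_mul _
      filter_upwards [(hV.const_div_atTop s).eventually_lt_const hη] with u hu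
      exact (Set.indicator_of_mem (Set.mem_Iio.2 hu) _).symm
  refine hrescaled.congr' ?_
  filter_upwards [hVpos] with u hv
  exact (rpow_mul_setIntegral_Ioo hv a η (q u)).symm

lemma tendsto_rpow_mul_setIntegral_zero (hV : Tendsto V l atTop) {f : ℝ → ℝ} {g : ι → ℝ → ℝ}
    {S : Set ℝ} {η : ℝ} (hS : MeasurableSet S) (hηS : ∀ z ∈ S, η ≤ z) (hη : 0 < η) (hp : 0 ≤ p)
    (hap : a < p) (hf : IntegrableOn f S)
    (hbound : ∀ᶠ u in l, ∀ z ∈ S, |g u z| ≤ C * (1 + V u * z) ^ (-p)) :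
    Tendsto (fun u => V u ^ a * ∫ z in S, f z * g u z) l (𝓝 0) := by
  have hlim : Tendsto (fun u => |C| * η ^ (-p) * (∫ z in S, |f z|) * V u ^ (-(p - a))) l (𝓝 0) := by
    simpa using ((tendsto_rpow_neg_atTop (sub_pos.2 hap)).comp hV).const_mul
      (|C| * η ^ (-p) * ∫ z in S, |f z|)
  refine squeeze_zero_norm' ?_ hlim
  filter_upwards [hbound, hV.eventually_gt_atTop 0] with u hu hv
  have hg (z : ℝ) (hz : z ∈ S) : |g u z| ≤ |C| * η ^ (-p) * V u ^ (-p) :=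
    calc |g u z| ≤ C * (1 + V u * z) ^ (-p) := hu z hz
      _ ≤ |C| * (η * V u) ^ (-p) := by
        have hle : η * V u ≤ 1 + V u * z := by nlinarith [hηS z hz]
        have hpow := Real.rpow_le_rpow_of_nonpos (by positivity) hle (neg_nonpos.2 hp)
        have hnonneg : 0 ≤ (1 + V u * z) ^ (-p) := Real.rpow_nonneg (by nlinarith) _
        gcongr
        exact le_abs_self C
      _ = |C| * η ^ (-p) * V u ^ (-p) := by rw [Real.mul_rpow hη.le hv.le, mul_assoc]
  have hint : ‖∫ z in S, f z * g u z‖ ≤ ∫ z in S, |f z| * (|C| * η ^ (-p) * V u ^ (-p)) := by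
    refine norm_integral_le_of_norm_le (hf.abs.mul_const _) ?_
    refine (ae_restrict_iff' hS).2 (.of_forall fun z hz => ?_)
    rw [Real.norm_eq_abs, abs_mul]
    gcongr
    exact hg z hz
  calc ‖V u ^ a * ∫ z in S, f z * g u z‖
      ≤ V u ^ a * ∫ z in S, |f z| * (|C| * η ^ (-p) * V u ^ (-p)) := by
        rw [norm_mul, Real.norm_of_nonneg (by positivity)]
        gcongr
    _ = |C| * η ^ (-p) * (∫ z in S, |f z|) * V u ^ (-(p - a)) := by
        rw [integral_mul_const, neg_sub, sub_eq_add_neg, Real.rpow_add hv]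
        ring

lemma tendsto_rpow_mul_setIntegral_Ioo_mul [l.IsCountablyGenerated] (hV : Tendsto V l atTop)
    {f : ℝ → ℝ} {g : ι → ℝ → ℝ} {h : ℝ → ℝ} {c η K : ℝ} (ha : 0 < a) (hap : a < p) (hη : 0 < η)
    (hf : Measurable f) (hfη : ∀ z ∈ Set.Ioo 0 η, |f z / z ^ (a - 1)| ≤ K)
    (hfc : Tendsto (fun z => f z / z ^ (a - 1)) (𝓝[>] 0) (𝓝 c)) (hg : ∀ u, Measurable (g u))
    (hbound : ∀ᶠ u in l, ∀ z ∈ Set.Ioo 0 η, |g u z| ≤ C * (1 + V u * z) ^ (-p))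
    (hlim : ∀ s, 0 < s → Tendsto (fun u => g u (s / V u)) l (𝓝 (h s))) :
    Tendsto (fun u => V u ^ a * ∫ z in Set.Ioo 0 η, f z * g u z) l
      (𝓝 (c * ∫ s in Set.Ioi 0, s ^ (a - 1) * h s)) := by
  have hquotient : Tendsto
      (fun u => V u ^ a * ∫ z in Set.Ioo 0 η, z ^ (a - 1) * (f z / z ^ (a - 1) * g u z)) l
      (𝓝 (∫ s in Set.Ioi 0, s ^ (a - 1) * (c * h s))) := by
    refine tendsto_rpow_mul_setIntegral_Ioo_rpow_mul hV (C := K * C) ha hap hη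
      (fun u => (by fun_prop : Measurable fun z => f z / z ^ (a - 1)).mul (hg u)) ?_ fun s hs => ?_
    · filter_upwards [hbound] with u hu z hz
      rw [abs_mul, mul_assoc]
      exact mul_le_mul (hfη z hz) (hu z hz) (abs_nonneg _) ((abs_nonneg _).trans (hfη z hz))
    · refine (hfc.comp (tendsto_nhdsWithin_iff.2 ⟨hV.const_div_atTop s, ?_⟩)).mul (hlim s hs)
      filter_upwards [hV.eventually_gt_atTop 0] with u hv using div_pos hs hv
  simp only [mul_left_comm _ c] at hquotient
  rw [integral_const_mul] at hquotient
  refine hquotient.congr fun u => ?_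
  congr 1
  refine setIntegral_congr_fun measurableSet_Ioo fun z hz => ?_
  have := Real.rpow_pos_of_pos hz.1 (a - 1)
  field_simp

lemma integrableOn_mul_of_abs_le_one_add_rpow_neg {f g : ℝ → ℝ} {v r : ℝ}
    (hf : IntegrableOn f (Set.Ioo 0 r)) (hg : Measurable g) (hv : 0 ≤ v) (hp : 0 ≤ p)
    (hbound : ∀ z ∈ Set.Ioo 0 r, |g z| ≤ C * (1 + v * z) ^ (-p)) :
    IntegrableOn (fun z => f z * g z) (Set.Ioo 0 r) := by
  refine hf.mul_bdd (c := |C|) hg.aestronglyMeasurable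
    ((ae_restrict_iff' measurableSet_Ioo).2 (.of_forall fun z hz => ?_))
  have hone : 1 ≤ 1 + v * z := le_add_of_nonneg_right (mul_nonneg hv hz.1.le)
  calc ‖g z‖ ≤ C * (1 + v * z) ^ (-p) := hbound z hz
    _ ≤ |C| * (1 + v * z) ^ (-p) := by gcongr; exact le_abs_self C
    _ ≤ |C| := mul_le_of_le_one_right (abs_nonneg C)
        (Real.rpow_le_one_of_one_le_of_nonpos hone (neg_nonpos.2 hp))

/-- Watson's lemma for a kernel `g u` living at scale `1 / V u`: only the behaviour of `f` at `0`
contributes. -/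
theorem tendsto_rpow_mul_setIntegral_mul [l.IsCountablyGenerated] (hV : Tendsto V l atTop)
    {f : ℝ → ℝ} {g : ι → ℝ → ℝ} {h : ℝ → ℝ} {c r : ℝ} (ha : 0 < a) (hap : a < p) (hr : 0 < r)
    (hf : Measurable f) (hfint : IntegrableOn f (Set.Ioo 0 r))
    (hfc : Tendsto (fun z => f z / z ^ (a - 1)) (𝓝[>] 0) (𝓝 c)) (hg : ∀ u, Measurable (g u))
    (hbound : ∀ᶠ u in l, ∀ z ∈ Set.Ioo 0 r, |g u z| ≤ C * (1 + V u * z) ^ (-p))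
    (hlim : ∀ s, 0 < s → Tendsto (fun u => g u (s / V u)) l (𝓝 (h s))) :
    Tendsto (fun u => V u ^ a * ∫ z in Set.Ioo 0 r, f z * g u z) l
      (𝓝 (c * ∫ s in Set.Ioi 0, s ^ (a - 1) * h s)) := by
  obtain ⟨η, ⟨hη, hηr⟩, hfη⟩ : ∃ η ∈ Set.Ioo 0 r, ∀ z ∈ Set.Ioo 0 η,
      |f z / z ^ (a - 1)| ≤ |c| + 1 := by
    have hev := hfc.abs.eventually_le_const (lt_add_one |c|)
    obtain ⟨η, hη, hsub⟩ := (mem_nhdsGT_iff_exists_Ioo_subset' hr).1 hev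
    obtain ⟨η', hη', hlt⟩ := exists_between (lt_min hη hr)
    exact ⟨η', ⟨hη', hlt.trans_le (min_le_right _ _)⟩,
      fun z hz => hsub ⟨hz.1, hz.2.trans (hlt.trans_le (min_le_left _ _))⟩⟩
  have hleft : Set.Ioo 0 η ⊆ Set.Ioo 0 r := Set.Ioo_subset_Ioo_right hηr.le
  have hright : Set.Ico η r ⊆ Set.Ioo 0 r := fun z hz => ⟨hη.trans_le hz.1, hz.2⟩
  have hnear := tendsto_rpow_mul_setIntegral_Ioo_mul hV ha hap hη hf hfη hfc hg
    (hbound.mono fun u hu z hz => hu z (hleft hz)) hlim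
  have hfar : Tendsto (fun u => V u ^ a * ∫ z in Set.Ico η r, f z * g u z) l (𝓝 0) :=
    tendsto_rpow_mul_setIntegral_zero hV measurableSet_Ico (fun z hz => hz.1) hη (ha.trans hap).le
      hap (hfint.mono_set hright) (hbound.mono fun u hu z hz => hu z (hright hz))
  rw [← add_zero (c * _)]
  refine (hnear.add hfar).congr' ?_
  filter_upwards [hbound, hV.eventually_ge_atTop 0] with u hu hv
  have hint := integrableOn_mul_of_abs_le_one_add_rpow_neg hfint (hg u) hv (ha.trans hap).le hu
  have hdisj : Disjoint (Set.Ioo 0 η) (Set.Ico η r) :=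
    Set.disjoint_left.2 fun z hz hz' => hz.2.not_ge hz'.1
  rw [← mul_add, ← setIntegral_union hdisj measurableSet_Ico (hint.mono_set hleft)
    (hint.mono_set hright), Set.Ioo_union_Ico_eq_Ioo hη hηr.le]

end Watson

namespace IsGumbelTail

variable {G w : ℝ → ℝ} (hG : IsGumbelTail G w) {φ : ℝ → ℝ} {κ : ℝ}
include hG

lemma tendsto_mul_scale_atTop (h0 : 0 < G 0) (hκ : 0 < κ) :
    Tendsto (fun u => κ * u * w u) (upperEndpointFilter G) atTop := by
  simpa only [sub_zero, mul_assoc] using (hG.tendsto_sub_mul_scale_atTop h0).const_mul_atTop hκ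

lemma tendsto_ratio_mul_comp (h0 : 0 < G 0) (hκ : 0 < κ) (hφ0 : φ 0 = 1)
    (hφ : HasDerivAt φ κ 0) {s : ℝ} (hs : 0 < s) :
    Tendsto (fun u => G (u * φ (s / (κ * u * w u))) / G u) (upperEndpointFilter G)
      (𝓝 (Real.exp (-s))) := by
  have hV := hG.tendsto_mul_scale_atTop h0 hκ
  have hsmall : Tendsto (fun u => s / (κ * u * w u)) (upperEndpointFilter G) (𝓝[≠] 0) := by
    refine tendsto_nhdsWithin_iff.2 ⟨hV.const_div_atTop s, ?_⟩
    filter_upwards [hV.eventually_gt_atTop 0] with u hu using (div_pos hs hu).ne'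
  have hslope : Tendsto (fun u => s / κ * slope φ 0 (s / (κ * u * w u)))
      (upperEndpointFilter G) (𝓝 s) := by
    simpa only [Function.comp_apply, div_mul_cancel₀ s hκ.ne'] using
      (hφ.tendsto_slope.comp hsmall).const_mul (s / κ)
  refine (hG.tendsto_ratio_of_tendsto hslope).congr' ?_
  filter_upwards [hG.eventually_gt h0, hG.eventually_scale_pos] with u hu hw
  congr 2
  rw [slope_def_field, hφ0, sub_zero]
  field_simp
  ring

lemma eventually_ratio_mul_comp_le {p r : ℝ} (h0 : 0 < G 0) (hκ : 0 ≤ κ) (hp : 0 < p)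
    (hφ : ∀ z ∈ Set.Ioo 0 r, 1 + κ * z ≤ φ z) :
    ∃ C, ∀ᶠ u in upperEndpointFilter G, ∀ z ∈ Set.Ioo 0 r,
      G (u * φ z) / G u ≤ C * (1 + κ * u * w u * z) ^ (-p) := by
  obtain ⟨C, hC⟩ := hG.eventually_ratio_le_rpow hp
  refine ⟨C, ?_⟩
  filter_upwards [hC, hG.eventually_gt h0, hG.eventually_scale_pos] with u hu hu0 hw z hz
  have hle : u + κ * u * w u * z / w u ≤ u * φ z :=
    calc u + κ * u * w u * z / w u = u * (1 + κ * z) := by field_simp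
      _ ≤ u * φ z := by gcongr; exact hφ z hz
  have hz0 := hz.1
  exact (div_le_div_of_nonneg_right (hG.antitone hle) (hG.nonneg u)).trans
    (hu (κ * u * w u * z) (by positivity))

theorem tendsto_rpow_mul_setIntegral_ratio {f : ℝ → ℝ} {a c r : ℝ} (h0 : 0 < G 0) (hκ : 0 < κ)
    (hφm : Measurable φ) (hφ0 : φ 0 = 1) (hφ' : HasDerivAt φ κ 0)
    (hφ : ∀ z ∈ Set.Ioo 0 r, 1 + κ * z ≤ φ z) (ha : 0 < a) (hr : 0 < r) (hf : Measurable f)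
    (hfint : IntegrableOn f (Set.Ioo 0 r))
    (hfc : Tendsto (fun z => f z / z ^ (a - 1)) (𝓝[>] 0) (𝓝 c)) :
    Tendsto (fun u => (κ * u * w u) ^ a * ∫ z in Set.Ioo 0 r, f z * (G (u * φ z) / G u))
      (upperEndpointFilter G) (𝓝 (c * Real.Gamma a)) := by
  have := isCountablyGenerated_upperEndpointFilter hG.antitone
  have hap : a < a + 1 := lt_add_one a
  obtain ⟨C, hC⟩ := hG.eventually_ratio_mul_comp_le h0 hκ.le (ha.trans hap) hφ
  have hGamma : Real.Gamma a = ∫ s in Set.Ioi 0, s ^ (a - 1) * Real.exp (-s) := by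
    simp only [Real.Gamma_eq_integral ha, mul_comm]
  rw [hGamma]
  refine tendsto_rpow_mul_setIntegral_mul (C := C) (hG.tendsto_mul_scale_atTop h0 hκ) ha hap hr hf
    hfint hfc (fun u => ?_) (hC.mono fun u hu z hz => ?_)
    fun s hs => hG.tendsto_ratio_mul_comp h0 hκ hφ0 hφ' hs
  · exact (hG.antitone.measurable.comp (hφm.const_mul u)).div_const (G u)
  · rw [abs_of_nonneg (div_nonneg (hG.nonneg _) (hG.nonneg u))]
    exact hu z hz

end IsGumbelTail

section OneSubRpow

variable {δ τ : ℝ}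

lemma one_add_mul_le_one_sub_rpow_neg {y : ℝ} (hy : y < 1) (hτ : 0 ≤ τ) :
    1 + τ * y ≤ (1 - y) ^ (-τ) := by
  have hpos : 0 < 1 - y := sub_pos.2 hy
  rw [Real.rpow_def_of_pos hpos]
  calc 1 + τ * y ≤ Real.log (1 - y) * -τ + 1 := by
        nlinarith [Real.log_le_sub_one_of_pos hpos]
    _ ≤ Real.exp (Real.log (1 - y) * -τ) := Real.add_one_le_exp _

lemma hasDerivAt_one_sub_mul_rpow_neg_zero (δ τ : ℝ) :
    HasDerivAt (fun z : ℝ => (1 - δ * z) ^ (-τ)) (δ * τ) 0 := by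
  have hlin : HasDerivAt (fun z : ℝ => 1 - δ * z) (-δ) 0 := by
    simpa using ((hasDerivAt_id (0 : ℝ)).const_mul δ).const_sub 1
  simpa using hlin.rpow_const (p := -τ) (by simp)

lemma mul_lt_one_of_mem_Ioo (hδ1 : δ ≤ 1) {z : ℝ} (hz : z ∈ Set.Ioo 0 1) : δ * z < 1 :=
  (mul_le_of_le_one_left hz.1.le hδ1).trans_lt hz.2

lemma lt_mul_one_sub_mul_rpow_iff (hδ1 : δ ≤ 1) {z : ℝ} (hz : z ∈ Set.Ioo 0 1) (u x τ : ℝ) :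
    u < x * (1 - δ * z) ^ τ ↔ u * (1 - δ * z) ^ (-τ) < x := by
  have hpos : 0 < 1 - δ * z := sub_pos.2 (mul_lt_one_of_mem_Ioo hδ1 hz)
  rw [Real.rpow_neg hpos.le, ← div_eq_mul_inv, div_lt_iff₀ (Real.rpow_pos_of_pos hpos τ)]

end OneSubRpow

section DistributionFunction

lemma lt_iff_lt_of_isLUB {f : ℝ → ℝ} {c x : ℝ} (hf : Monotone f)
    (hfx : ContinuousWithinAt f (Set.Ici x) x) (hx : IsLUB {u | f u < c} x) (u : ℝ) :
    f u < c ↔ u < x := by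
  refine ⟨fun hu => (hx.1 hu).lt_of_ne ?_, fun hu => ?_⟩
  · rintro rfl
    have hev := ((hfx.mono Set.Ioi_subset_Ici_self).eventually_lt_const hu).and self_mem_nhdsWithin
    obtain ⟨y, hyc, hy⟩ := hev.exists
    exact (hx.1 hyc).not_gt hy
  · obtain ⟨y, hyc, huy, -⟩ := hx.exists_between hu
    exact (hf huy.le).trans_lt hyc

variable {μ : Measure ℝ}

lemma one_sub_cdf_pos_iff {x : ℝ} (hx : IsLUB {u | cdf μ u < 1} x) (u : ℝ) :
    0 < 1 - cdf μ u ↔ u < x :=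
  sub_pos.trans (lt_iff_lt_of_isLUB (monotone_cdf μ) ((cdf μ).right_continuous x) hx u)

lemma upperEndpointFilter_one_sub_cdf {l : Filter ℝ}
    (hl : (l = atTop ∧ ∀ u, cdf μ u < 1) ∨
      ∃ x, 0 < x ∧ l = 𝓝[<] x ∧ IsLUB {u | cdf μ u < 1} x) :
    upperEndpointFilter (fun u => 1 - cdf μ u) = l ∧ 0 < 1 - cdf μ 0 := by
  obtain ⟨rfl, hlt⟩ | ⟨x, hx, rfl, hlub⟩ := hl
  · exact ⟨upperEndpointFilter_eq_atTop fun u => sub_pos.2 (hlt u), sub_pos.2 (hlt 0)⟩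
  · exact ⟨upperEndpointFilter_eq_nhdsLT (one_sub_cdf_pos_iff hlub),
      (one_sub_cdf_pos_iff hlub 0).2 hx⟩

lemma isGumbelTail_one_sub_cdf {w : ℝ → ℝ} (hpos : ∃ u, 0 < 1 - cdf μ u)
    (hMDA : ∀ x : ℝ, Tendsto (fun u => (1 - cdf μ (u + x / w u)) / (1 - cdf μ u))
      (upperEndpointFilter fun u => 1 - cdf μ u) (𝓝 (Real.exp (-x)))) :
    IsGumbelTail (fun u => 1 - cdf μ u) w where
  antitone _ _ h := sub_le_sub_left (monotone_cdf μ h) 1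
  nonneg u := sub_nonneg.2 (cdf_le_one μ u)
  exists_pos := hpos
  tendsto_ratio := hMDA

end DistributionFunction

section Independence

variable {Ω : Type*} [MeasurableSpace Ω] {P : Measure Ω} [IsProbabilityMeasure P] {X Z : Ω → ℝ}

lemma measureReal_lt_eq_one_sub_cdf_map (hX : Measurable X) (u : ℝ) :
    P.real {ω | u < X ω} = 1 - cdf (P.map X) u := by
  have := Measure.isProbabilityMeasure_map (μ := P) hX.aemeasurable
  rw [cdf_eq_real, ← probReal_compl_eq_one_sub measurableSet_Iic, Set.compl_Iic,
    map_measureReal_apply hX measurableSet_Ioi]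
  rfl

lemma measureReal_lt_eq_integral_map (hX : Measurable X) (hZ : Measurable Z)
    (hXZ : IndepFun X Z P) {ψ : ℝ → ℝ} (hψ : Measurable ψ) :
    P.real {ω | ψ (Z ω) < X ω} = ∫ z, 1 - cdf (P.map X) (ψ z) ∂P.map Z := by
  have := Measure.isProbabilityMeasure_map (μ := P) hX.aemeasurable
  have hS : MeasurableSet {q : ℝ × ℝ | ψ q.2 < q.1} := measurableSet_lt (by fun_prop) (by fun_prop)
  have hjoint : P {ω | ψ (Z ω) < X ω} = ∫⁻ z, P {ω | ψ z < X ω} ∂P.map Z := by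
    have hprod := Measure.prod_apply_symm (μ := P.map X) (ν := P.map Z) hS
    rw [← hXZ.map_prod_eq_prod_map_map hX.aemeasurable hZ.aemeasurable,
      Measure.map_apply (hX.prodMk hZ) hS] at hprod
    refine hprod.trans (lintegral_congr fun z => ?_)
    exact Measure.map_apply hX (measurable_prodMk_right hS)
  have hmeas : Measurable fun z => P {ω | ψ z < X ω} := by
    have hanti : Antitone fun u => P {ω | u < X ω} :=
      fun u v huv => measure_mono fun ω (hω : v < X ω) => huv.trans_lt hω
    exact hanti.measurable.comp hψ
  simp only [← measureReal_lt_eq_one_sub_cdf_map hX, measureReal_def]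
  rw [hjoint, integral_toReal hmeas.aemeasurable (.of_forall fun z => measure_lt_top P _)]

end Independence

section WithDensity

variable {α : Type*} [MeasurableSpace α] {m : Measure α} {f : α → ℝ} {S : Set α}

lemma integrable_of_isFiniteMeasure_withDensity_ofReal
    [IsFiniteMeasure (m.withDensity fun z => ENNReal.ofReal (f z))] (hf : Measurable f)
    (hf0 : ∀ z, 0 ≤ f z) : Integrable f m := by
  refine (lintegral_ofReal_ne_top_iff_integrable hf.aestronglyMeasurable (.of_forall hf0)).1 ?_
  rw [← setLIntegral_univ, ← withDensity_apply _ .univ]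
  exact measure_ne_top _ _

lemma ae_withDensity_ofReal_mem (hf : Measurable f) (hfS : f.support ⊆ S) :
    ∀ᵐ z ∂m.withDensity fun z => ENNReal.ofReal (f z), z ∈ S := by
  refine (ae_withDensity_iff hf.ennreal_ofReal).2 (.of_forall fun z hz => hfS fun hfz => hz ?_)
  rw [hfz, ENNReal.ofReal_zero]

lemma integral_withDensity_ofReal_eq_setIntegral_mul (hf : Measurable f) (hf0 : ∀ z, 0 ≤ f z)
    (hfS : f.support ⊆ S) (g : α → ℝ) :
    ∫ z, g z ∂m.withDensity (fun z => ENNReal.ofReal (f z)) = ∫ z in S, f z * g z ∂m := by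
  rw [integral_withDensity_eq_integral_toReal_smul hf.ennreal_ofReal
    (.of_forall fun _ => ENNReal.ofReal_lt_top),
    setIntegral_eq_integral_of_forall_compl_eq_zero fun z hz => ?_]
  · simp only [ENNReal.toReal_ofReal (hf0 _), smul_eq_mul]
  · rw [Function.notMem_support.1 (mt (@hfS z) hz), zero_mul]

end WithDensity

section Product

variable {Ω : Type*} [MeasurableSpace Ω] {P : Measure Ω} [IsProbabilityMeasure P] {X Z : Ω → ℝ}
  {f w : ℝ → ℝ} {a c δ τ : ℝ}

lemma measureReal_lt_mul_one_sub_rpow (hX : Measurable X) (hZ : Measurable Z)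
    (hXZ : IndepFun X Z P) (hf : Measurable f) (hf0 : ∀ z, 0 ≤ f z)
    (hfsupp : f.support ⊆ Set.Ioo 0 1)
    (hlaw : P.map Z = volume.withDensity fun z => ENNReal.ofReal (f z)) (hδ1 : δ ≤ 1) (τ u : ℝ) :
    P.real {ω | u < X ω * (1 - δ * Z ω) ^ τ} =
      ∫ z in Set.Ioo 0 1, f z * (1 - cdf (P.map X) (u * (1 - δ * z) ^ (-τ))) := by
  have hZ01 : ∀ᵐ ω ∂P, Z ω ∈ Set.Ioo 0 1 :=
    ae_of_ae_map hZ.aemeasurable (hlaw ▸ ae_withDensity_ofReal_mem hf hfsupp)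
  calc P.real {ω | u < X ω * (1 - δ * Z ω) ^ τ}
      = P.real {ω | u * (1 - δ * Z ω) ^ (-τ) < X ω} := by
        refine measureReal_congr ?_
        filter_upwards [hZ01] with ω hω
        exact propext (lt_mul_one_sub_mul_rpow_iff hδ1 hω u (X ω) τ)
    _ = ∫ z, 1 - cdf (P.map X) (u * (1 - δ * z) ^ (-τ)) ∂P.map Z :=
        measureReal_lt_eq_integral_map hX hZ hXZ (ψ := fun z => u * (1 - δ * z) ^ (-τ))
          (by fun_prop)
    _ = _ := by rw [hlaw, integral_withDensity_ofReal_eq_setIntegral_mul hf hf0 hfsupp]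

lemma IsGumbelTail.tendsto_measureReal_lt_mul_one_sub_rpow
    (hG : IsGumbelTail (fun u => 1 - cdf (P.map X) u) w) (h0 : 0 < 1 - cdf (P.map X) 0)
    (hX : Measurable X) (hZ : Measurable Z) (hXZ : IndepFun X Z P)
    (hf : Measurable f) (hf0 : ∀ z, 0 ≤ f z) (hfsupp : f.support ⊆ Set.Ioo 0 1)
    (hlaw : P.map Z = volume.withDensity fun z => ENNReal.ofReal (f z)) (ha : 0 < a)
    (hfc : Tendsto (fun z => f z / z ^ (a - 1)) (𝓝[>] 0) (𝓝 c))
    (hδ0 : 0 < δ) (hδ1 : δ ≤ 1) (hτ : 0 < τ) :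
    Tendsto (fun u => P.real {ω | u < X ω * (1 - δ * Z ω) ^ τ} /
        ((δ * τ * u * w u) ^ (-a) * (1 - cdf (P.map X) u)))
      (upperEndpointFilter fun u => 1 - cdf (P.map X) u) (𝓝 (c * Real.Gamma a)) := by
  have hκ : 0 < δ * τ := mul_pos hδ0 hτ
  have hfint : Integrable f := by
    have := Measure.isProbabilityMeasure_map (μ := P) hZ.aemeasurable
    rw [hlaw] at this
    exact integrable_of_isFiniteMeasure_withDensity_ofReal hf hf0
  have hφ (z : ℝ) (hz : z ∈ Set.Ioo 0 1) : 1 + δ * τ * z ≤ (1 - δ * z) ^ (-τ) := by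
    simpa only [mul_left_comm, mul_assoc] using
      one_add_mul_le_one_sub_rpow_neg (mul_lt_one_of_mem_Ioo hδ1 hz) hτ.le
  have hlim := hG.tendsto_rpow_mul_setIntegral_ratio h0 hκ (by fun_prop) (by simp)
    (hasDerivAt_one_sub_mul_rpow_neg_zero δ τ) hφ ha one_pos hf hfint.integrableOn hfc
  refine hlim.congr' ?_
  filter_upwards [(hG.tendsto_mul_scale_atTop h0 hκ).eventually_gt_atTop 0] with u hu
  rw [measureReal_lt_mul_one_sub_rpow hX hZ hXZ hf hf0 hfsupp hlaw hδ1, Real.rpow_neg hu.le]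
  simp only [← mul_div_assoc, integral_div]
  field_simp

end Product

section BetaDensity

lemma betaPDF_eq_betaPDFReal (a b : ℝ) : _root_.betaPDF a b = betaPDFReal a b := by
  ext x
  simp only [_root_.betaPDF, betaPDFReal, ProbabilityTheory.beta, one_div_div]
  congr 1
  ring

lemma support_betaPDF_subset (a b : ℝ) : (_root_.betaPDF a b).support ⊆ Set.Ioo 0 1 := fun _ hx =>
  not_not.1 fun h => hx (if_neg h)

lemma betaPDF_nonneg {a b : ℝ} (ha : 0 < a) (hb : 0 < b) (x : ℝ) : 0 ≤ _root_.betaPDF a b x := by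
  by_cases hx : 0 < x ∧ x < 1
  · rw [betaPDF_eq_betaPDFReal]
    exact (betaPDFReal_pos hx.1 hx.2 ha hb).le
  · exact (if_neg hx).ge

lemma measurable_betaPDF (a b : ℝ) : Measurable (_root_.betaPDF a b) :=
  betaPDF_eq_betaPDFReal a b ▸ measurable_betaPDFReal a b

lemma tendsto_betaPDF_div_rpow (a b : ℝ) :
    Tendsto (fun x => _root_.betaPDF a b x / x ^ (a - 1)) (𝓝[>] 0)
      (𝓝 (Real.Gamma (a + b) / (Real.Gamma a * Real.Gamma b))) := by
  have hcont : ContinuousAt (fun x : ℝ => (1 - x) ^ (b - 1)) 0 :=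
    ContinuousAt.rpow_const (by fun_prop) (Or.inl (by norm_num))
  have hlim : Tendsto (fun x : ℝ => (1 - x) ^ (b - 1)) (𝓝[>] 0) (𝓝 1) := by
    simpa using hcont.tendsto.mono_left nhdsWithin_le_nhds
  rw [← one_mul (Real.Gamma (a + b) / _)]
  refine (hlim.mul_const _).congr' ?_
  filter_upwards [Ioo_mem_nhdsGT one_pos] with x hx
  have hpos := Real.rpow_pos_of_pos hx.1 (a - 1)
  rw [_root_.betaPDF, if_pos (Set.mem_Ioo.1 hx), mul_assoc, mul_div_cancel_left₀ _ hpos.ne']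

lemma Gamma_add_div_mul_pos {a b : ℝ} (ha : 0 < a) (hb : 0 < b) :
    0 < Real.Gamma (a + b) / (Real.Gamma a * Real.Gamma b) :=
  div_pos (Real.Gamma_pos_of_pos (add_pos ha hb))
    (mul_pos (Real.Gamma_pos_of_pos ha) (Real.Gamma_pos_of_pos hb))

lemma Gamma_add_div_mul_mul_cancel {a : ℝ} (ha : 0 < a) (b : ℝ) :
    Real.Gamma (a + b) / (Real.Gamma a * Real.Gamma b) * Real.Gamma a =
      Real.Gamma (a + b) / Real.Gamma b := by
  have hΓ := (Real.Gamma_pos_of_pos ha).ne'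
  field_simp

end BetaDensity

theorem product_beta_tail_gumbel_general
    {Ω : Type*} [MeasurableSpace Ω] (P : Measure Ω) [IsProbabilityMeasure P]
    (X Z : Ω → ℝ) (hXmeas : Measurable X) (hZmeas : Measurable Z) (hInd : IndepFun X Z P)
    (F : ℝ → ℝ) (hF : ∀ u, F u = (P {ω | X ω ≤ u}).toReal)
    (f : ℝ → ℝ) (hf : Measurable f) (hf0 : ∀ z, 0 ≤ f z) (hfsupp : f.support ⊆ Set.Ioo 0 1)
    (hZ : P.map Z = volume.withDensity (fun z => ENNReal.ofReal (f z)))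
    (a c : ℝ) (ha : 0 < a) (hc : c ≠ 0)
    (hfc : Tendsto (fun z => f z / z ^ (a - 1)) (𝓝[>] 0) (𝓝 c))
    (δ τ : ℝ) (hδ0 : 0 < δ) (hδ1 : δ ≤ 1) (hτ : 0 < τ)
    (Y : Ω → ℝ) (hY : ∀ ω, Y ω = X ω * (1 - δ * Z ω) ^ τ)
    (l : Filter ℝ)
    (hxF : (l = atTop ∧ ∀ u, F u < 1) ∨ ∃ x, 0 < x ∧ l = 𝓝[<] x ∧ IsLUB {u | F u < 1} x)
    (w : ℝ → ℝ)
    (hMDA : ∀ x : ℝ,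
      Tendsto (fun u => (1 - F (u + x / w u)) / (1 - F u)) l (𝓝 (Real.exp (-x)))) :
    Tendsto (fun u =>
        (P {ω | Y ω > u}).toReal /
          (c * Real.Gamma a * (δ * τ * u * w u) ^ (-a) * (1 - F u)))
      l (𝓝 1) := by
  obtain rfl : F = cdf (P.map X) := by
    have := Measure.isProbabilityMeasure_map (μ := P) hXmeas.aemeasurable
    ext u
    rw [cdf_eq_real, map_measureReal_apply hXmeas measurableSet_Iic]
    exact hF u
  obtain ⟨rfl, h0⟩ := upperEndpointFilter_one_sub_cdf hxF
  have hcΓ : c * Real.Gamma a ≠ 0 := mul_ne_zero hc (Real.Gamma_pos_of_pos ha).ne'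
  have hlim := (isGumbelTail_one_sub_cdf ⟨0, h0⟩ hMDA).tendsto_measureReal_lt_mul_one_sub_rpow
    h0 hXmeas hZmeas hInd hf hf0 hfsupp hZ ha hfc hδ0 hδ1 hτ
  simpa only [hY, gt_iff_lt, measureReal_def, div_div, mul_comm _ (c * Real.Gamma a), mul_assoc,
    div_self hcΓ] using hlim.div_const (c * Real.Gamma a)

/-- Theorem 5 a), tail part: asymptotics of `P(Y > u)` for `Y = X(1 - δZ)^τ` with
`F ∈ MDA(Λ, w)`. -/
theorem product_beta_tail_gumbel
    {Ω : Type*} [MeasurableSpace Ω] (P : Measure Ω) [IsProbabilityMeasure P]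
    (X Z : Ω → ℝ)
    (hXmeas : Measurable X) (hZmeas : Measurable Z)
    (hInd : IndepFun X Z P)
    -- `F` is the distribution function of `X`, with `F(0) = 0`
    (F : ℝ → ℝ) (hF : ∀ u, F u = (P {ω | X ω ≤ u}).toReal) (hF0 : F 0 = 0)
    -- `Z ~ Beta(a, b)`
    (a b : ℝ) (ha : 0 < a) (hb : 0 < b)
    (hZ : P.map Z = volume.withDensity (fun x => ENNReal.ofReal (betaPDF a b x)))
    (δ τ : ℝ) (hδ0 : 0 < δ) (hδ1 : δ ≤ 1) (hτ : 0 < τ)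
    (Y : Ω → ℝ) (hY : ∀ ω, Y ω = X ω * (1 - δ * Z ω) ^ τ)
    -- `l` is the filter `u ↑ x_F`, where the upper endpoint `x_F` of `F` is `∞` or `1`
    (l : Filter ℝ)
    (hxF : (l = atTop ∧ ∀ u, F u < 1) ∨ (l = 𝓝[<] (1 : ℝ) ∧ IsLUB {u | F u < 1} 1))
    -- `F ∈ MDA(Λ, w)` with positive scaling function `w`
    (w : ℝ → ℝ) (hw : ∀ u, 0 < w u)
    (hMDA : ∀ x : ℝ,
      Tendsto (fun u => (1 - F (u + x / w u)) / (1 - F u)) l (𝓝 (Real.exp (-x))))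
 :
    Tendsto (fun u =>
        (P {ω | Y ω > u}).toReal /
          ((Real.Gamma (a + b) / Real.Gamma b) * (δ * τ * u * w u) ^ (-a) * (1 - F u)))
      l (𝓝 1) := by
  rw [← Gamma_add_div_mul_mul_cancel ha b]
  exact product_beta_tail_gumbel_general P X Z hXmeas hZmeas hInd F hF _ (measurable_betaPDF a b)
    (betaPDF_nonneg ha hb) (support_betaPDF_subset a b) hZ a _ ha (Gamma_add_div_mul_pos ha hb).ne'
    (tendsto_betaPDF_div_rpow a b) δ τ hδ0 hδ1 hτ Y hY l
    (hxF.imp_right fun h => ⟨1, one_pos, h⟩) w hMDA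
end
end

section
/- Let X = A R U be a Kotz Type III elliptical random vector in ℝ^d, d ≥ 2, i.e. 1 − F(u) = (1+o(1)) c u^N exp(−δ u^τ) as u → ∞ with c, δ, τ ∈ (0,∞), N ∈ ℝ. Then, as u → ∞, P(‖X‖ > u √λ_(m)) = (1+o(1)) c C_* (Γ(d/2)/Γ(m/2)) (2/(δτ))^{(d−m)/2} u^{τ(m−d)/2 + N} exp(−δ u^τ). -/
open MeasureTheory Filter Topology Matrix ProbabilityTheory

noncomputable section

open scoped RealInnerProductSpace ENNReal

/-! By rotation invariance the uniform law on the sphere is that of a normalised Gaussian vector.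
Split `U`, in an eigenbasis of `Aᵀ A`, into its component `Y` in the top eigenspace and the rest
`Z`. Then `‖X‖² = R² λ_(m) (‖Y‖² + ∑ (λ_j / λ_(m)) Z_j²)`, and `w = Z / ‖Y‖`, being invariant under
scaling of `(Y, Z)`, has the same law as for Gaussian `Y` and `Z`, with density proportional to
`(1 + ‖w‖²) ^ (-d/2)`. As `‖Y‖² + ‖Z‖² = 1`, the event `‖X‖ > u √λ_(m)` becomes `R > u t(w)` with
`t(w)² = (1 + ‖w‖²) / (1 + ∑ (λ_j / λ_(m)) w_j²)`, which is minimal and equal to `1` at `w = 0`.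
Laplace's method with `w = u ^ (-τ/2) v` gives, by dominated convergence, the tail of `R` times
`u ^ (-τ(d-m)/2)` times a Gaussian integral over `ℝ^(d-m)`, whose determinant produces `C_*`. -/

section UniformSphere

variable {E F : Type*}
  [NormedAddCommGroup E] [InnerProductSpace ℝ E] [MeasurableSpace E] [BorelSpace E]
  [NormedAddCommGroup F] [InnerProductSpace ℝ F] [MeasurableSpace F] [BorelSpace F]

/-- `μ` is, up to its total mass, the uniform distribution on the unit sphere of `E`, encoded by
rotation invariance: see `IsUniformSphereMeasure.eq`. -/
structure IsUniformSphereMeasure (μ : Measure E) : Prop where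
  norm_eq_one : ∀ᵐ x ∂μ, ‖x‖ = 1
  map_eq : ∀ e : E ≃ₗᵢ[ℝ] E, μ.map e = μ

namespace IsUniformSphereMeasure

variable {μ ν : Measure E}

lemma charFun_eq_of_norm_eq (hμ : IsUniformSphereMeasure μ) {s t : E} (h : ‖s‖ = ‖t‖) :
    charFun μ s = charFun μ t := by
  have hinv (e : E ≃ₗᵢ[ℝ] E) (v : E) : charFun μ (e v) = charFun μ v := by
    conv_lhs => rw [← hμ.map_eq e]
    have he : AEMeasurable e μ := e.continuous.measurable.aemeasurable
    rw [charFun_apply, integral_map he (by fun_prop), charFun_apply]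
    simp only [LinearIsometryEquiv.inner_map_map]
  rw [← Submodule.reflection_sub h, hinv]

lemma integral_charFun_smul (hμ : IsUniformSphereMeasure μ) (hν : IsUniformSphereMeasure ν)
    (t : E) :
    ∫ y, charFun μ (‖t‖ • y) ∂ν = ν.real Set.univ • charFun μ t := by
  have h : ∀ᵐ y ∂ν, charFun μ (‖t‖ • y) = charFun μ t := by
    filter_upwards [hν.norm_eq_one] with y hy
    exact hμ.charFun_eq_of_norm_eq (by rw [norm_smul, hy, norm_norm, mul_one])
  rw [integral_congr_ae h, integral_const]

theorem eq [CompleteSpace E] [SecondCountableTopology E] [IsProbabilityMeasure μ]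
    [IsProbabilityMeasure ν] (hμ : IsUniformSphereMeasure μ) (hν : IsUniformSphereMeasure ν) :
    μ = ν := by
  refine Measure.ext_of_charFun (funext fun t => ?_)
  have hint : Integrable (Function.uncurry fun x y : E =>
      Complex.exp (⟪y, ‖t‖ • x⟫ * Complex.I)) (ν.prod μ) := by
    refine Integrable.of_bound (C := 1) (by unfold Function.uncurry; fun_prop)
      (ae_of_all _ fun z => ?_)
    simp [Function.uncurry, Complex.norm_exp_ofReal_mul_I]
  calc charFun μ t = ∫ x, charFun μ (‖t‖ • x) ∂ν := by simp [hμ.integral_charFun_smul hν]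
    _ = ∫ y, ∫ x, Complex.exp (⟪y, ‖t‖ • x⟫ * Complex.I) ∂ν ∂μ := by
      simp only [charFun_apply]
      exact integral_integral_swap hint
    _ = ∫ y, charFun ν (‖t‖ • y) ∂μ := by
      simp only [charFun_apply, real_inner_smul_right, real_inner_comm]
    _ = charFun ν t := by simp [hν.integral_charFun_smul hμ]

lemma map (hμ : IsUniformSphereMeasure μ) (e : E ≃ₗᵢ[ℝ] F) :
    IsUniformSphereMeasure (μ.map e) where
  norm_eq_one := by
    have he : AEMeasurable e μ := e.continuous.measurable.aemeasurable
    rw [ae_map_iff he (measurableSet_eq_fun (by fun_prop) (by fun_prop))]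
    simpa only [LinearIsometryEquiv.norm_map] using hμ.norm_eq_one
  map_eq f := by
    have he : Measurable e := e.continuous.measurable
    have hf : Measurable f := f.continuous.measurable
    have hef : Measurable ((e.trans f).trans e.symm) :=
      LinearIsometryEquiv.continuous _ |>.measurable
    conv_rhs => rw [← hμ.map_eq ((e.trans f).trans e.symm), Measure.map_map he hef]
    rw [Measure.map_map hf he]
    congr 1
    ext x
    simp

end IsUniformSphereMeasure

end UniformSphere

section Gaussian

variable {E F : Type*}
  [NormedAddCommGroup E] [InnerProductSpace ℝ E] [FiniteDimensional ℝ E]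
  [MeasurableSpace E] [BorelSpace E]
  [NormedAddCommGroup F] [InnerProductSpace ℝ F] [FiniteDimensional ℝ F]
  [MeasurableSpace F] [BorelSpace F]

lemma integral_cexp_inner_mul_rexp_neg_norm_sq_div_two (t : E) :
    ∫ x : E, Complex.exp (⟪x, t⟫ * Complex.I) * (Real.exp (-‖x‖ ^ 2 / 2) : ℂ) =
      (2 * Real.pi : ℂ) ^ (Module.finrank ℝ E / 2 : ℂ) * Complex.exp (-‖t‖ ^ 2 / 2) := by
  have h := GaussianFourier.integral_cexp_neg_mul_sq_norm_add (b := 1 / 2) (by norm_num)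
    Complex.I t
  convert h using 1
  · refine integral_congr_ae (ae_of_all _ fun x => ?_)
    simp only [Complex.ofReal_exp, ← Complex.exp_add, real_inner_comm x t]
    push_cast
    ring_nf
  · rw [Complex.I_sq]
    ring_nf

lemma stdGaussian_eq_withDensity :
    stdGaussian E = volume.withDensity fun x => ENNReal.ofReal
      ((2 * Real.pi) ^ (-(Module.finrank ℝ E / 2 : ℝ)) * Real.exp (-‖x‖ ^ 2 / 2)) := by
  have hpi : (0 : ℝ) < 2 * Real.pi := by positivity
  have hint : Integrable fun x : E =>
      (2 * Real.pi) ^ (-(Module.finrank ℝ E / 2 : ℝ)) * Real.exp (-‖x‖ ^ 2 / 2) := by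
    have h := GaussianFourier.integral_rexp_neg_mul_sq_norm (V := E) (b := 1 / 2) (by norm_num)
    have h0 : Integrable fun x : E => Real.exp (-(1 / 2) * ‖x‖ ^ 2) :=
      .of_integral_ne_zero (h ▸ (Real.rpow_pos_of_pos (by positivity) _).ne')
    refine (h0.congr (ae_of_all _ fun x => ?_)).const_mul _
    ring_nf
  have := isFiniteMeasure_withDensity_ofReal hint.2
  refine Measure.ext_of_charFun (funext fun t => ?_)
  rw [charFun_stdGaussian, charFun_apply, integral_withDensity_eq_integral_toReal_smul
    (by fun_prop) (by simp)]
  calc Complex.exp (-‖t‖ ^ 2 / 2)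
      = ((2 * Real.pi) ^ (-(Module.finrank ℝ E / 2 : ℝ)) : ℝ) *
          ∫ x : E, Complex.exp (⟪x, t⟫ * Complex.I) * (Real.exp (-‖x‖ ^ 2 / 2) : ℂ) := by
        rw [integral_cexp_inner_mul_rexp_neg_norm_sq_div_two, ← mul_assoc,
          Complex.ofReal_cpow hpi.le]
        push_cast
        rw [← Complex.cpow_add _ _ (by simp [Real.pi_ne_zero]), neg_add_cancel, Complex.cpow_zero,
          one_mul]
    _ = _ := by
        rw [← integral_const_mul]
        refine integral_congr_ae (ae_of_all _ fun x => ?_)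
        dsimp only
        rw [ENNReal.toReal_ofReal (by positivity), Complex.real_smul, Complex.ofReal_mul]
        ring

lemma ae_ne_zero_stdGaussian [Nontrivial E] : ∀ᵐ x ∂stdGaussian E, x ≠ 0 := by
  rw [stdGaussian_eq_withDensity]
  exact (withDensity_absolutelyContinuous _ _).ae_le (Measure.ae_ne volume 0)

lemma measurable_normalize : Measurable (NormedSpace.normalize : E → E) := by
  unfold NormedSpace.normalize
  fun_prop

lemma isUniformSphereMeasure_map_normalize_stdGaussian [Nontrivial E] :
    IsUniformSphereMeasure ((stdGaussian E).map NormedSpace.normalize) := by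
  have hn := measurable_normalize (E := E)
  refine ⟨?_, fun e => ?_⟩
  · rw [ae_map_iff hn.aemeasurable (measurableSet_eq_fun (by fun_prop) (by fun_prop))]
    simpa only [NormedSpace.norm_normalize_eq_one_iff] using ae_ne_zero_stdGaussian
  · have he : Measurable e := e.continuous.measurable
    conv_rhs => rw [← stdGaussian_map e, Measure.map_map hn he]
    rw [Measure.map_map he hn]
    congr 1
    ext x
    simp [NormedSpace.normalize]

lemma integral_Ioi_pow_mul_exp_neg_mul_sq (n : ℕ) {b : ℝ} (hb : 0 < b) :
    ∫ r in Set.Ioi (0 : ℝ), r ^ n * Real.exp (-b * r ^ 2) =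
      b ^ (-((n + 1 : ℝ) / 2)) * (1 / 2) * Real.Gamma ((n + 1) / 2) := by
  have h := integral_rpow_mul_exp_neg_mul_rpow (p := 2) (q := n) two_pos
    (neg_one_lt_zero.trans_le n.cast_nonneg) hb
  simp only [Real.rpow_natCast, Real.rpow_ofNat] at h
  rw [h, neg_div]

lemma volume_real_ball_zero_one [Nontrivial E] :
    volume.real (Metric.ball (0 : E) 1) =
      Real.pi ^ (Module.finrank ℝ E / 2 : ℝ) / Real.Gamma (Module.finrank ℝ E / 2 + 1) := by
  rw [Measure.real, InnerProductSpace.volume_ball, ENNReal.ofReal_one, one_pow, one_mul,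
    ENNReal.toReal_ofReal (by positivity), Real.sqrt_eq_rpow,
    ← Real.rpow_mul_natCast (by positivity)]
  ring_nf

lemma integral_norm_pow_mul_exp_neg_mul_sq [Nontrivial E] (k : ℕ) {b : ℝ} (hb : 0 < b) :
    ∫ y : E, ‖y‖ ^ k * Real.exp (-b * ‖y‖ ^ 2) =
      Real.pi ^ (Module.finrank ℝ E / 2 : ℝ) * b ^ (-((Module.finrank ℝ E + k : ℝ) / 2)) *
        (Real.Gamma ((Module.finrank ℝ E + k) / 2) / Real.Gamma (Module.finrank ℝ E / 2)) := by
  have hm : 0 < Module.finrank ℝ E := Module.finrank_pos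
  have hexp : ((Module.finrank ℝ E - 1 + k : ℕ) : ℝ) + 1 = Module.finrank ℝ E + k := by
    norm_cast
    lia
  rw [integral_fun_norm_addHaar volume fun r : ℝ => r ^ k * Real.exp (-b * r ^ 2)]
  simp only [smul_eq_mul, ← mul_assoc, ← pow_add]
  rw [integral_Ioi_pow_mul_exp_neg_mul_sq _ hb, hexp, volume_real_ball_zero_one,
    Real.Gamma_add_one (by positivity), nsmul_eq_mul]
  field_simp

end Gaussian

section CentralProjection

variable {E F : Type*} [NormedAddCommGroup E] [NormedAddCommGroup F] [NormedSpace ℝ F]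

/-- The map `(y, z) ↦ z / ‖y‖`, with junk value `0` where `y = 0`. It records the direction of
`(y, z)` up to rotations of `y`. -/
def centralProjection (x : WithLp 2 (E × F)) : F := ‖x.fst‖⁻¹ • x.snd

lemma measurable_centralProjection [MeasurableSpace E] [OpensMeasurableSpace E]
    [MeasurableSpace F] [BorelSpace F] [SecondCountableTopology F] :
    Measurable (centralProjection : WithLp 2 (E × F) → F) := by
  have hofLp := WithLp.measurable_ofLp 2 (E × F)
  exact (measurable_fst.comp hofLp).norm.inv.smul (measurable_snd.comp hofLp)

lemma centralProjection_normalize [NormedSpace ℝ E] (x : WithLp 2 (E × F)) :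
    centralProjection (NormedSpace.normalize x) = centralProjection x := by
  rcases eq_or_ne x 0 with rfl | hx
  · rw [NormedSpace.normalize_zero_eq_zero]
  · have hx : ‖x‖ ≠ 0 := norm_ne_zero_iff.2 hx
    simp only [centralProjection, NormedSpace.normalize, WithLp.smul_fst, WithLp.smul_snd,
      norm_smul, norm_inv, norm_norm, mul_inv, inv_inv, smul_smul]
    rw [mul_right_comm, mul_inv_cancel₀ hx, one_mul]

end CentralProjection

section StudentDensity

variable {E F : Type*}
  [NormedAddCommGroup E] [InnerProductSpace ℝ E] [FiniteDimensional ℝ E]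
  [MeasurableSpace E] [BorelSpace E] [NormedAddCommGroup F] [NormedSpace ℝ F]

/-- The normalising constant of `studentDensity` on a `k`-dimensional space. -/
def studentConst (m k : ℕ) : ℝ :=
  Real.pi ^ (-(k / 2 : ℝ)) * (Real.Gamma ((m + k) / 2) / Real.Gamma (m / 2))

/-- The density of `Z / ‖Y‖` for independent standard Gaussian vectors `Y` and `Z` of dimensions
`m` and `finrank ℝ F`: a multivariate Student law with `m` degrees of freedom, up to the scale
factor `√m`. -/
def studentDensity (m : ℕ) (w : F) : ℝ :=
  studentConst m (Module.finrank ℝ F) *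
    (1 + ‖w‖ ^ 2) ^ (-(m + Module.finrank ℝ F : ℝ) / 2)

lemma studentDensity_pos {m : ℕ} (hm : 0 < m) (w : F) : 0 < studentDensity m w := by
  unfold studentDensity studentConst
  positivity

lemma lintegral_norm_pow_mul_exp_eq_studentDensity [Nontrivial E] (w : F) :
    ∫⁻ y : E, ENNReal.ofReal (‖y‖ ^ Module.finrank ℝ F *
      ((2 * Real.pi) ^ (-((Module.finrank ℝ E + Module.finrank ℝ F : ℝ) / 2)) *
        Real.exp (-(‖y‖ ^ 2 * (1 + ‖w‖ ^ 2)) / 2))) =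
      ENNReal.ofReal (studentDensity (Module.finrank ℝ E) w) := by
  have hb : 0 < (1 + ‖w‖ ^ 2) / 2 := by positivity
  set κ := (2 * Real.pi) ^ (-((Module.finrank ℝ E + Module.finrank ℝ F : ℝ) / 2)) with hκ
  have hκI : ∫ y : E, ‖y‖ ^ Module.finrank ℝ F *
      (κ * Real.exp (-(‖y‖ ^ 2 * (1 + ‖w‖ ^ 2)) / 2)) =
        studentDensity (Module.finrank ℝ E) w := by
    have hexp (y : E) : -(‖y‖ ^ 2 * (1 + ‖w‖ ^ 2)) / 2 = -((1 + ‖w‖ ^ 2) / 2) * ‖y‖ ^ 2 := by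
      ring
    have hpi : Real.pi ^ (-(Module.finrank ℝ F / 2 : ℝ)) = Real.pi ^
        (-((Module.finrank ℝ E + Module.finrank ℝ F : ℝ) / 2)) *
          Real.pi ^ (Module.finrank ℝ E / 2 : ℝ) := by
      rw [← Real.rpow_add Real.pi_pos]
      ring_nf
    simp only [mul_left_comm _ κ, hexp]
    rw [integral_const_mul, integral_norm_pow_mul_exp_neg_mul_sq _ hb, studentDensity,
      studentConst, hκ, hpi, neg_div, Real.mul_rpow two_pos.le Real.pi_pos.le,
      Real.div_rpow (by positivity) two_pos.le]
    field_simp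
  have hint := Integrable.of_integral_ne_zero
    (hκI.trans_ne (studentDensity_pos Module.finrank_pos w).ne')
  rw [← ofReal_integral_eq_lintegral_ofReal hint (ae_of_all _ fun y => by positivity), hκI]

end StudentDensity

section GaussianProjection

variable {E F : Type*}
  [NormedAddCommGroup E] [InnerProductSpace ℝ E] [FiniteDimensional ℝ E]
  [MeasurableSpace E] [BorelSpace E]
  [NormedAddCommGroup F] [InnerProductSpace ℝ F] [FiniteDimensional ℝ F]
  [MeasurableSpace F] [BorelSpace F]

lemma ae_fst_ne_zero_stdGaussian [Nontrivial E] :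
    ∀ᵐ x ∂stdGaussian (WithLp 2 (E × F)), x.fst ≠ 0 := by
  let S : Submodule ℝ (WithLp 2 (E × F)) :=
    LinearMap.ker (LinearMap.fst ℝ E F ∘ₗ (WithLp.linearEquiv 2 ℝ (E × F)).toLinearMap)
  have hS : S ≠ ⊤ := by
    obtain ⟨y, hy⟩ := exists_ne (0 : E)
    exact fun h => hy (show WithLp.toLp 2 (y, (0 : F)) ∈ S from h ▸ Submodule.mem_top)
  rw [stdGaussian_eq_withDensity]
  refine (withDensity_absolutelyContinuous _ _).ae_le
    (measure_mono_null (fun x hx => ?_) (Measure.addHaar_submodule volume S hS))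
  simpa [S] using hx

lemma lintegral_eq_pow_mul_lintegral_comp_smul {g : F → ℝ≥0∞} (hg : Measurable g) {r : ℝ}
    (hr : 0 < r) :
    ∫⁻ x, g x = ENNReal.ofReal (r ^ Module.finrank ℝ F) * ∫⁻ x, g (r • x) := by
  have hpow : 0 < r ^ Module.finrank ℝ F := pow_pos hr _
  rw [← lintegral_map hg (measurable_const_smul r), Measure.map_addHaar_smul volume hr.ne',
    lintegral_smul_measure, smul_eq_mul, ← mul_assoc, ← ENNReal.ofReal_mul hpow.le,
    abs_of_pos (inv_pos.2 hpow), mul_inv_cancel₀ hpow.ne', ENNReal.ofReal_one, one_mul]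

lemma lintegral_stdGaussian_withLp_prod {f : WithLp 2 (E × F) → ℝ≥0∞} (hf : Measurable f) :
    ∫⁻ x, f x ∂stdGaussian (WithLp 2 (E × F)) = ∫⁻ y : E, ∫⁻ z : F,
      ENNReal.ofReal ((2 * Real.pi) ^ (-((Module.finrank ℝ E + Module.finrank ℝ F : ℝ) / 2)) *
        Real.exp (-(‖y‖ ^ 2 + ‖z‖ ^ 2) / 2)) * f (WithLp.toLp 2 (y, z)) := by
  have hdim : Module.finrank ℝ (WithLp 2 (E × F)) = Module.finrank ℝ E + Module.finrank ℝ F := by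
    rw [(WithLp.linearEquiv 2 ℝ (E × F)).finrank_eq, Module.finrank_prod]
  rw [stdGaussian_eq_withDensity, lintegral_withDensity_eq_lintegral_mul _ (by fun_prop) hf,
    ← (WithLp.volume_preserving_toLp E F).lintegral_comp (by fun_prop), Measure.volume_eq_prod,
    lintegral_prod _ (by fun_prop)]
  simp [WithLp.prod_norm_sq_eq_of_L2, hdim]

theorem map_centralProjection_stdGaussian [Nontrivial E] :
    (stdGaussian (WithLp 2 (E × F))).map centralProjection =
      volume.withDensity fun w => ENNReal.ofReal (studentDensity (Module.finrank ℝ E) w) := by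
  set κ := (2 * Real.pi) ^ (-((Module.finrank ℝ E + Module.finrank ℝ F : ℝ) / 2))
  refine Measure.ext_of_lintegral _ fun f hf => ?_
  have hrescale : ∀ᵐ y : E, ∫⁻ z : F,
      ENNReal.ofReal (κ * Real.exp (-(‖y‖ ^ 2 + ‖z‖ ^ 2) / 2)) * f (‖y‖⁻¹ • z) =
      ∫⁻ w : F, ENNReal.ofReal (‖y‖ ^ Module.finrank ℝ F *
        (κ * Real.exp (-(‖y‖ ^ 2 * (1 + ‖w‖ ^ 2)) / 2))) * f w := by
    filter_upwards [Measure.ae_ne volume (0 : E)] with y hy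
    have hy : 0 < ‖y‖ := norm_pos_iff.2 hy
    rw [lintegral_eq_pow_mul_lintegral_comp_smul (by fun_prop) hy,
      ← lintegral_const_mul _ (by fun_prop)]
    refine lintegral_congr fun w => ?_
    rw [inv_smul_smul₀ hy.ne', norm_smul, norm_norm, mul_pow, ← mul_one_add,
      ENNReal.ofReal_mul (pow_nonneg hy.le _), mul_assoc]
  calc ∫⁻ w, f w ∂(stdGaussian (WithLp 2 (E × F))).map centralProjection
      = ∫⁻ y : E, ∫⁻ z : F,
        ENNReal.ofReal (κ * Real.exp (-(‖y‖ ^ 2 + ‖z‖ ^ 2) / 2)) * f (‖y‖⁻¹ • z) := by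
        rw [lintegral_map hf measurable_centralProjection]
        exact lintegral_stdGaussian_withLp_prod (hf.comp measurable_centralProjection)
    _ = ∫⁻ w : F, ∫⁻ y : E, ENNReal.ofReal (‖y‖ ^ Module.finrank ℝ F *
        (κ * Real.exp (-(‖y‖ ^ 2 * (1 + ‖w‖ ^ 2)) / 2))) * f w := by
        rw [lintegral_congr_ae hrescale,
          lintegral_lintegral_swap (by unfold Function.uncurry; fun_prop)]
    _ = ∫⁻ w, f w ∂volume.withDensity fun w =>
          ENNReal.ofReal (studentDensity (Module.finrank ℝ E) w) := by
        rw [lintegral_withDensity_eq_lintegral_mul _ (by unfold studentDensity; fun_prop) hf]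
        refine lintegral_congr fun w => ?_
        rw [lintegral_mul_const _ (by fun_prop), lintegral_norm_pow_mul_exp_eq_studentDensity]
        rfl

namespace IsUniformSphereMeasure

variable {μ : Measure (WithLp 2 (E × F))} [IsProbabilityMeasure μ] [Nontrivial E]

lemma eq_map_normalize_stdGaussian (hμ : IsUniformSphereMeasure μ) :
    μ = (stdGaussian (WithLp 2 (E × F))).map NormedSpace.normalize :=
  have := (WithLp.linearEquiv 2 ℝ (E × F)).toEquiv.nontrivial
  have := Measure.isProbabilityMeasure_map (μ := stdGaussian (WithLp 2 (E × F)))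
    measurable_normalize.aemeasurable
  hμ.eq isUniformSphereMeasure_map_normalize_stdGaussian

lemma ae_fst_ne_zero (hμ : IsUniformSphereMeasure μ) : ∀ᵐ x ∂μ, x.fst ≠ 0 := by
  have hmeas : MeasurableSet {x : WithLp 2 (E × F) | x.fst ≠ 0} :=
    (measurableSet_eq_fun (by fun_prop) measurable_const).compl
  rw [hμ.eq_map_normalize_stdGaussian, ae_map_iff measurable_normalize.aemeasurable hmeas]
  filter_upwards [ae_fst_ne_zero_stdGaussian] with x hx
  have hx0 : x ≠ 0 := fun h => hx (by rw [h]; rfl)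
  exact smul_ne_zero (inv_ne_zero (norm_ne_zero_iff.2 hx0)) hx

theorem map_centralProjection (hμ : IsUniformSphereMeasure μ) :
    μ.map centralProjection =
      volume.withDensity fun w => ENNReal.ofReal (studentDensity (Module.finrank ℝ E) w) := by
  rw [hμ.eq_map_normalize_stdGaussian,
    Measure.map_map measurable_centralProjection measurable_normalize,
    ← map_centralProjection_stdGaussian]
  congr 1
  exact funext centralProjection_normalize

end IsUniformSphereMeasure

end GaussianProjection

section KotzTail

/-- The Kotz Type III tail function `u ↦ c u ^ N exp (-δ u ^ τ)`. -/
def kotzTail (c δ τ N u : ℝ) : ℝ := c * u ^ N * Real.exp (-δ * u ^ τ)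

variable {c δ τ N u t : ℝ}

lemma kotzTail_pos (hc : 0 < c) (hu : 0 < u) : 0 < kotzTail c δ τ N u := by
  unfold kotzTail
  positivity

lemma kotzTail_mul (hu : 0 < u) (ht : 0 < t) :
    kotzTail c δ τ N (u * t) =
      kotzTail c δ τ N u * (t ^ N * Real.exp (-δ * (u ^ τ * (t ^ τ - 1)))) := by
  have hexp : -δ * (u ^ τ * t ^ τ) = -δ * u ^ τ + -δ * (u ^ τ * (t ^ τ - 1)) := by ring
  rw [kotzTail, kotzTail, Real.mul_rpow hu.le ht.le, Real.mul_rpow hu.le ht.le, hexp, Real.exp_add]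
  ring

lemma div_kotzTail_eq (hc : 0 < c) (hu : 0 < u) (ht : 0 < t) (g : ℝ) :
    g / kotzTail c δ τ N u =
      g / kotzTail c δ τ N (u * t) * (t ^ N * Real.exp (-δ * (u ^ τ * (t ^ τ - 1)))) := by
  have hK : 0 < kotzTail c δ τ N u := kotzTail_pos hc hu
  rw [kotzTail_mul hu ht]
  field_simp

lemma kotzTail_const_mul_rpow (L a : ℝ) (hu : 0 < u) :
    kotzTail (c * L) δ τ (N + a) u = kotzTail c δ τ N u * u ^ a * L := by
  rw [kotzTail, kotzTail, Real.rpow_add hu]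
  ring

lemma tendsto_div_kotzTail_const_mul_rpow {g : ℝ → ℝ} {L a : ℝ} (hL : L ≠ 0)
    (hg : Tendsto (fun u => g u / (kotzTail c δ τ N u * u ^ a)) atTop (𝓝 L)) :
    Tendsto (fun u => g u / kotzTail (c * L) δ τ (N + a) u) atTop (𝓝 1) := by
  have hdiv := hg.div_const L
  rw [div_self hL] at hdiv
  refine hdiv.congr' ?_
  filter_upwards [eventually_gt_atTop 0] with u hu
  rw [div_div, kotzTail_const_mul_rpow L a hu]

lemma exists_forall_one_add_rpow_le_mul_exp (p : ℝ) {b : ℝ} (hb : 0 < b) :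
    ∃ C : ℝ, 0 < C ∧ ∀ x : ℝ, 0 ≤ x → (1 + x) ^ p ≤ C * Real.exp (b * x) := by
  set q := |p| + 1
  have hq : 0 < q := by positivity
  refine ⟨(q / b) ^ q * Real.exp b, by positivity, fun x hx => ?_⟩
  have hlin : 1 + x ≤ q / b * Real.exp (b / q * (1 + x)) := by
    have := Real.add_one_le_exp (b / q * (1 + x))
    rw [← div_le_iff₀' (by positivity), div_div_eq_mul_div, mul_comm (1 + x), mul_div_right_comm]
    linarith
  calc (1 + x) ^ p ≤ (1 + x) ^ q :=
        Real.rpow_le_rpow_of_exponent_le (by linarith) (by linarith [le_abs_self p])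
    _ ≤ (q / b * Real.exp (b / q * (1 + x))) ^ q := Real.rpow_le_rpow (by linarith) hlin hq.le
    _ = (q / b) ^ q * Real.exp b * Real.exp (b * x) := by
        rw [Real.mul_rpow (by positivity) (Real.exp_pos _).le, ← Real.exp_mul, mul_assoc (_ ^ q),
          ← Real.exp_add]
        congr 2
        field_simp

lemma exists_forall_exp_neg_le_mul_one_add_rpow (p : ℝ) {b : ℝ} (hb : 0 < b) :
    ∃ C : ℝ, 0 < C ∧ ∀ x : ℝ, 0 ≤ x → Real.exp (-(b * x)) ≤ C * (1 + x) ^ p := by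
  obtain ⟨C, hC, hpow⟩ := exists_forall_one_add_rpow_le_mul_exp (-p) hb
  refine ⟨C, hC, fun x hx => ?_⟩
  have h := hpow x hx
  rwa [Real.rpow_neg (by linarith), inv_le_iff_one_le_mul₀ (by positivity), mul_right_comm,
    ← div_le_iff₀ (Real.exp_pos _), one_div, ← Real.exp_neg] at h

variable {G : ℝ → ℝ} (hc : 0 < c)
  (hG : Tendsto (fun u => G u / kotzTail c δ τ N u) atTop (𝓝 1))
include hc hG

lemma tendsto_comp_mul_div_kotzTail {t : ℝ → ℝ} {ℓ : ℝ} (ht : Tendsto t atTop (𝓝 1))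
    (hℓ : Tendsto (fun u => u ^ τ * (t u ^ τ - 1)) atTop (𝓝 ℓ)) :
    Tendsto (fun u => G (u * t u) / kotzTail c δ τ N u) atTop (𝓝 (Real.exp (-δ * ℓ))) := by
  have hut : Tendsto (fun u => u * t u) atTop atTop := tendsto_id.atTop_mul_pos one_pos ht
  have htN : Tendsto (fun u => t u ^ N) atTop (𝓝 1) := by
    simpa using ht.rpow_const (p := N) (Or.inl one_ne_zero)
  have hexp := (Real.continuous_exp.tendsto _).comp (hℓ.const_mul (-δ))
  have hlim := (hG.comp hut).mul (htN.mul hexp)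
  rw [one_mul, one_mul] at hlim
  refine hlim.congr' ?_
  filter_upwards [eventually_gt_atTop 0, ht.eventually_const_lt one_pos] with u hu htu
  exact (div_kotzTail_eq hc hu htu _).symm

/-- A Potter-type bound, uniform in `t ≥ 1`: half of the exponential decay survives. -/
lemma exists_eventually_abs_comp_mul_div_kotzTail_le (hδ : 0 < δ) (hτ : 0 < τ) :
    ∃ C, 0 < C ∧ ∀ᶠ u in atTop, ∀ t ≥ 1,
      |G (u * t) / kotzTail c δ τ N u| ≤ C * Real.exp (-(δ / 2) * (u ^ τ * (t ^ τ - 1))) := by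
  obtain ⟨C, hC, hpow⟩ := exists_forall_one_add_rpow_le_mul_exp (N / τ) (half_pos hδ)
  have hratio : ∀ᶠ v in atTop, |G v / kotzTail c δ τ N v| ≤ 2 :=
    hG.abs.eventually_le_const (by norm_num)
  refine ⟨2 * C, by positivity, ?_⟩
  filter_upwards [eventually_forall_ge_atTop.2 hratio, eventually_ge_atTop 1] with u hu hu1 t ht
  have hu0 : 0 < u := one_pos.trans_le hu1
  have ht0 : 0 < t := one_pos.trans_le ht
  have htτ : 0 ≤ t ^ τ - 1 := sub_nonneg.2 (Real.one_le_rpow ht hτ.le)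
  have hle : t ^ τ - 1 ≤ u ^ τ * (t ^ τ - 1) :=
    le_mul_of_one_le_left htτ (Real.one_le_rpow hu1 hτ.le)
  have htN : t ^ N ≤ C * Real.exp (δ / 2 * (u ^ τ * (t ^ τ - 1))) := calc
    t ^ N = (1 + (t ^ τ - 1)) ^ (N / τ) := by
      rw [add_sub_cancel, ← Real.rpow_mul ht0.le, mul_div_cancel₀ _ hτ.ne']
    _ ≤ C * Real.exp (δ / 2 * (t ^ τ - 1)) := hpow _ htτ
    _ ≤ _ := by gcongr
  rw [div_kotzTail_eq hc hu0 ht0, abs_mul, abs_of_pos (by positivity : 0 < t ^ N * Real.exp _)]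
  calc _ ≤ 2 * (C * Real.exp (δ / 2 * (u ^ τ * (t ^ τ - 1))) *
        Real.exp (-δ * (u ^ τ * (t ^ τ - 1)))) := by
        gcongr
        exact hu _ (le_mul_of_one_le_right hu0.le ht)
    _ = _ := by
        rw [mul_assoc C, ← Real.exp_add, ← mul_assoc]
        ring_nf

end KotzTail

section RadialStretch

/-- If `‖Y‖² + ‖Z‖² = 1` and `Z = ‖Y‖ w`, then `R √(‖Y‖² + ‖S Z‖²) > u` exactly when
`R > u * radialStretch (‖S w‖²) (‖w‖²)`. -/
def radialStretch (a b : ℝ) : ℝ := √((1 + b) / (1 + a))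

variable {a b τ : ℝ}

lemma radialStretch_rpow (ha : 0 ≤ a) (hb : 0 ≤ b) (τ : ℝ) :
    radialStretch a b ^ τ = ((1 + b) / (1 + a)) ^ (τ / 2) := by
  rw [radialStretch, Real.sqrt_eq_rpow, ← Real.rpow_mul (by positivity)]
  ring_nf

lemma one_le_radialStretch (ha : 0 ≤ a) (hab : a ≤ b) : 1 ≤ radialStretch a b := by
  rw [radialStretch, Real.one_le_sqrt, one_le_div (by linarith)]
  linarith

lemma le_radialStretch_rpow_sub_one (hτ : 0 < τ) (ha : 0 ≤ a) (hb : 0 ≤ b) :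
    τ / 2 * ((b - a) / (1 + b)) ≤ radialStretch a b ^ τ - 1 := by
  have hx : 0 < (1 + b) / (1 + a) := by positivity
  have hlog := Real.one_sub_inv_le_log_of_pos hx
  have heq : 1 - ((1 + b) / (1 + a))⁻¹ = (b - a) / (1 + b) := by
    field_simp
    ring
  rw [radialStretch_rpow ha hb, Real.rpow_def_of_pos hx]
  have hexp := Real.add_one_le_exp (Real.log ((1 + b) / (1 + a)) * (τ / 2))
  have := mul_le_mul_of_nonneg_left (heq ▸ hlog) (half_pos hτ).le
  linarith

lemma tendsto_rpow_neg_atTop_nhdsGT_zero (hτ : 0 < τ) :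
    Tendsto (fun u : ℝ => u ^ (-τ)) atTop (𝓝[>] 0) :=
  tendsto_nhdsWithin_iff.2 ⟨tendsto_rpow_neg_atTop hτ, by
    filter_upwards [eventually_gt_atTop 0] with u hu using Real.rpow_pos_of_pos hu _⟩

lemma tendsto_radialStretch_mul (hτ : 0 < τ) (a b : ℝ) :
    Tendsto (fun u : ℝ => radialStretch (u ^ (-τ) * a) (u ^ (-τ) * b)) atTop (𝓝 1) := by
  have hs := tendsto_rpow_neg_atTop hτ
  have h := (((hs.mul_const b).const_add 1).div ((hs.mul_const a).const_add 1) (by simp)).sqrt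
  simpa [radialStretch] using h

lemma hasDerivAt_one_add_mul_div_rpow (a b p : ℝ) :
    HasDerivAt (fun s : ℝ => ((1 + s * b) / (1 + s * a)) ^ p) (p * (b - a)) 0 := by
  have hlin (x : ℝ) : HasDerivAt (fun s : ℝ => 1 + s * x) x 0 := by
    simpa using ((hasDerivAt_id (0 : ℝ)).mul_const x).const_add 1
  have hdiv : HasDerivAt (fun s : ℝ => (1 + s * b) / (1 + s * a)) (b - a) 0 := by
    simpa using! (hlin b).fun_div (hlin a) (by simp)
  simpa [mul_comm p] using! hdiv.rpow_const (p := p) (Or.inl (by simp))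

lemma tendsto_rpow_mul_radialStretch_rpow_sub_one (hτ : 0 < τ) (ha : 0 ≤ a) (hb : 0 ≤ b) :
    Tendsto (fun u : ℝ => u ^ τ * (radialStretch (u ^ (-τ) * a) (u ^ (-τ) * b) ^ τ - 1)) atTop
      (𝓝 (τ / 2 * (b - a))) := by
  have hslope := (hasDerivAt_one_add_mul_div_rpow a b (τ / 2)).tendsto_slope_zero_right.comp
    (tendsto_rpow_neg_atTop_nhdsGT_zero hτ)
  refine hslope.congr' ?_
  filter_upwards [eventually_gt_atTop 0] with u hu
  rw [radialStretch_rpow (by positivity) (by positivity)]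
  simp [Real.rpow_neg hu.le]

lemma lt_mul_sqrt_iff_mul_radialStretch_lt {E F H : Type*} [NormedAddCommGroup E]
    [NormedAddCommGroup F] [NormedSpace ℝ F] [NormedAddCommGroup H] [NormedSpace ℝ H]
    (S : F →L[ℝ] H) {x : WithLp 2 (E × F)} (hx : ‖x‖ = 1)
    (hx₁ : x.fst ≠ 0) (u r : ℝ) :
    u < r * √(‖x.fst‖ ^ 2 + ‖S x.snd‖ ^ 2) ↔
      u * radialStretch (‖S (centralProjection x)‖ ^ 2) (‖centralProjection x‖ ^ 2) < r := by
  have hsum : ‖x.fst‖ ^ 2 + ‖x.snd‖ ^ 2 = 1 := by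
    rw [← WithLp.prod_norm_sq_eq_of_L2, hx, one_pow]
  have hstretch : radialStretch (‖S (centralProjection x)‖ ^ 2) (‖centralProjection x‖ ^ 2) =
      (√(‖x.fst‖ ^ 2 + ‖S x.snd‖ ^ 2))⁻¹ := by
    rw [radialStretch, ← Real.sqrt_inv, centralProjection, map_smul, norm_smul, norm_smul, norm_inv,
      norm_norm]
    congr 1
    field_simp
    rw [hsum]
  rw [hstretch, mul_inv_lt_iff₀ (by positivity)]

end RadialStretch

section Laplace

variable {c δ τ N : ℝ} {G : ℝ → ℝ}

lemma le_rpow_mul_radialStretch_rpow_sub_one {κ a b u : ℝ} (hτ : 0 < τ) (ha : 0 ≤ a)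
    (hb : 0 ≤ b) (hab : a ≤ κ * b) (hu : 0 < u) :
    τ / 2 * (1 - κ) * (b / (1 + u ^ (-τ) * b)) ≤
      u ^ τ * (radialStretch (u ^ (-τ) * a) (u ^ (-τ) * b) ^ τ - 1) := by
  have hs : 0 < u ^ (-τ) := Real.rpow_pos_of_pos hu _
  have hus : u ^ τ * u ^ (-τ) = 1 := by rw [← Real.rpow_add hu, add_neg_cancel, Real.rpow_zero]
  set s := u ^ (-τ)
  calc τ / 2 * (1 - κ) * (b / (1 + s * b)) = τ / 2 * ((b - κ * b) / (1 + s * b)) := by ring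
    _ ≤ τ / 2 * ((b - a) / (1 + s * b)) := by gcongr
    _ = u ^ τ * (τ / 2 * ((s * b - s * a) / (1 + s * b))) := by
      rw [← mul_sub, mul_div_assoc, mul_left_comm _ s, ← mul_assoc, hus, one_mul]
    _ ≤ _ := by
      gcongr
      exact le_radialStretch_rpow_sub_one hτ (by positivity) (by positivity)

/-- Trading exponential for polynomial decay bounds the rescaled integrand of the Laplace
method uniformly in `u`. -/
lemma exists_eventually_abs_radialStretch_mul_rpow_le {κ D : ℝ} (hc : 0 < c) (hδ : 0 < δ)
    (hτ : 0 < τ) (hκ : κ < 1) (hD : 0 ≤ D)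
    (hG : Tendsto (fun u => G u / kotzTail c δ τ N u) atTop (𝓝 1)) :
    ∃ C, ∀ᶠ u in atTop, ∀ a b, 0 ≤ a → a ≤ κ * b → 0 ≤ b →
      |G (u * radialStretch (u ^ (-τ) * a) (u ^ (-τ) * b)) / kotzTail c δ τ N u *
        (1 + u ^ (-τ) * b) ^ (-D / 2)| ≤ C * (1 + b) ^ (-D / 2) := by
  obtain ⟨C₁, hC₁, hPotter⟩ := exists_eventually_abs_comp_mul_div_kotzTail_le hc hG hδ hτ
  have hβ : 0 < δ / 2 * (τ / 2 * (1 - κ)) := by have := sub_pos.2 hκ; positivity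
  set β := δ / 2 * (τ / 2 * (1 - κ)) with hβdef
  obtain ⟨C₂, hC₂, hpow⟩ := exists_forall_exp_neg_le_mul_one_add_rpow (-D / 2) hβ
  refine ⟨C₁ * C₂, ?_⟩
  filter_upwards [hPotter, eventually_gt_atTop 0] with u hu hu0 a b ha hab hb
  have hs : 0 < u ^ (-τ) := Real.rpow_pos_of_pos hu0 _
  have hab' : a ≤ b := hab.trans (mul_le_of_le_one_left hb hκ.le)
  have hgrow := le_rpow_mul_radialStretch_rpow_sub_one hτ ha hb hab hu0
  have hbound := hu (radialStretch (u ^ (-τ) * a) (u ^ (-τ) * b))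
    (one_le_radialStretch (by positivity) (by gcongr))
  set s := u ^ (-τ)
  have hsb : 0 < 1 + s * b := by positivity
  set y := b / (1 + s * b) with hy
  have hy0 : 0 ≤ y := by positivity
  have hprod : 1 + b ≤ (1 + y) * (1 + s * b) := by
    rw [add_mul, hy, div_mul_cancel₀ _ hsb.ne']
    linarith [mul_nonneg hs.le hb]
  have hexp : Real.exp (-(δ / 2) * (u ^ τ * (radialStretch (s * a) (s * b) ^ τ - 1))) ≤
      C₂ * (1 + y) ^ (-D / 2) := calc
    _ ≤ Real.exp (-(β * y)) := by
      rw [Real.exp_le_exp, hβdef, mul_assoc, neg_mul]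
      gcongr
    _ ≤ C₂ * (1 + y) ^ (-D / 2) := hpow y hy0
  rw [abs_mul, abs_of_pos (Real.rpow_pos_of_pos hsb _)]
  calc _ ≤ C₁ * (C₂ * (1 + y) ^ (-D / 2)) * (1 + s * b) ^ (-D / 2) := by
        gcongr
        exact hbound.trans (by gcongr)
    _ = C₁ * C₂ * ((1 + y) * (1 + s * b)) ^ (-D / 2) := by
        rw [Real.mul_rpow (by positivity) hsb.le]
        ring
    _ ≤ C₁ * C₂ * (1 + b) ^ (-D / 2) := by
        gcongr C₁ * C₂ * ?_
        exact Real.rpow_le_rpow_of_nonpos (by positivity) hprod (by linarith)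

variable {F H : Type*} [NormedAddCommGroup F] [InnerProductSpace ℝ F] [FiniteDimensional ℝ F]
  [MeasurableSpace F] [BorelSpace F] [NormedAddCommGroup H] [NormedSpace ℝ H]

lemma integral_radialStretch_eq_rescaled (S : F →L[ℝ] H) (G : ℝ → ℝ) (D τ : ℝ) {u : ℝ}
    (hu : 0 < u) :
    ∫ w : F, G (u * radialStretch (‖S w‖ ^ 2) (‖w‖ ^ 2)) * (1 + ‖w‖ ^ 2) ^ (-D / 2) =
      u ^ (-(τ / 2) * Module.finrank ℝ F) *
        ∫ w : F, G (u * radialStretch (u ^ (-τ) * ‖S w‖ ^ 2) (u ^ (-τ) * ‖w‖ ^ 2)) *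
          (1 + u ^ (-τ) * ‖w‖ ^ 2) ^ (-D / 2) := by
  set r := u ^ (-(τ / 2)) with hr
  have hr0 : 0 < r := Real.rpow_pos_of_pos hu _
  have hr2 : r ^ 2 = u ^ (-τ) := by
    rw [hr, ← Real.rpow_mul_natCast hu.le]
    ring_nf
  have hpow : 0 < r ^ Module.finrank ℝ F := pow_pos hr0 _
  have h := Measure.integral_comp_smul volume (fun w : F =>
    G (u * radialStretch (‖S w‖ ^ 2) (‖w‖ ^ 2)) * (1 + ‖w‖ ^ 2) ^ (-D / 2)) r
  simp only [map_smul, norm_smul, mul_pow, Real.norm_eq_abs, sq_abs, hr2, abs_inv,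
    abs_of_pos hpow, smul_eq_mul] at h
  rw [h, Real.rpow_mul_natCast hu.le, mul_inv_cancel_left₀ hpow.ne']

lemma tendsto_integral_rescaled (hc : 0 < c) (hδ : 0 < δ) (hτ : 0 < τ) {D : ℝ}
    (hD : Module.finrank ℝ F < D) {S : F →L[ℝ] H} (hS : ‖S‖ < 1) (hGm : Measurable G)
    (hG : Tendsto (fun u => G u / kotzTail c δ τ N u) atTop (𝓝 1)) :
    Tendsto (fun u => ∫ w : F,
      G (u * radialStretch (u ^ (-τ) * ‖S w‖ ^ 2) (u ^ (-τ) * ‖w‖ ^ 2)) / kotzTail c δ τ N u *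
        (1 + u ^ (-τ) * ‖w‖ ^ 2) ^ (-D / 2)) atTop
      (𝓝 (∫ w : F, Real.exp (-δ * (τ / 2 * (‖w‖ ^ 2 - ‖S w‖ ^ 2))))) := by
  have hSw (w : F) : ‖S w‖ ^ 2 ≤ ‖S‖ ^ 2 * ‖w‖ ^ 2 := by
    rw [← mul_pow]
    gcongr
    exact S.le_opNorm w
  obtain ⟨C, hC⟩ := exists_eventually_abs_radialStretch_mul_rpow_le hc hδ hτ
    (pow_lt_one₀ (norm_nonneg S) hS two_ne_zero) ((Nat.cast_nonneg _).trans hD.le) hG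
  refine tendsto_integral_filter_of_dominated_convergence
    (fun w => C * (1 + ‖w‖ ^ 2) ^ (-D / 2)) ?_ ?_
    ((integrable_rpow_neg_one_add_norm_sq hD).const_mul C) ?_
  · refine Eventually.of_forall fun u => Measurable.aestronglyMeasurable ?_
    unfold radialStretch
    fun_prop
  · filter_upwards [hC] with u hu
    exact ae_of_all _ fun w => hu _ _ (by positivity) (hSw w) (by positivity)
  · refine ae_of_all _ fun w => ?_
    have hdens : Tendsto (fun u : ℝ => (1 + u ^ (-τ) * ‖w‖ ^ 2) ^ (-D / 2)) atTop (𝓝 1) := by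
      simpa using (((tendsto_rpow_neg_atTop hτ).mul_const (‖w‖ ^ 2)).const_add 1).rpow_const
        (p := -D / 2) (Or.inl (by simp))
    simpa using (tendsto_comp_mul_div_kotzTail hc hG (tendsto_radialStretch_mul hτ _ _)
      (tendsto_rpow_mul_radialStretch_rpow_sub_one hτ (by positivity) (by positivity))).mul hdens

theorem tendsto_integral_radialStretch (hc : 0 < c) (hδ : 0 < δ) (hτ : 0 < τ) {D : ℝ}
    (hD : Module.finrank ℝ F < D) {S : F →L[ℝ] H} (hS : ‖S‖ < 1) (hGm : Measurable G)
    (hG : Tendsto (fun u => G u / kotzTail c δ τ N u) atTop (𝓝 1)) :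
    Tendsto (fun u =>
        (∫ w : F, G (u * radialStretch (‖S w‖ ^ 2) (‖w‖ ^ 2)) * (1 + ‖w‖ ^ 2) ^ (-D / 2)) /
          (kotzTail c δ τ N u * u ^ (-(τ / 2) * Module.finrank ℝ F))) atTop
      (𝓝 (∫ w : F, Real.exp (-δ * (τ / 2 * (‖w‖ ^ 2 - ‖S w‖ ^ 2))))) := by
  refine (tendsto_integral_rescaled hc hδ hτ hD hS hGm hG).congr' ?_
  filter_upwards [eventually_gt_atTop 0] with u hu
  have hK : 0 < kotzTail c δ τ N u := kotzTail_pos hc hu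
  rw [integral_radialStretch_eq_rescaled S G D τ hu]
  simp only [div_mul_eq_mul_div]
  rw [integral_div]
  field_simp

end Laplace

section Tail

variable {Ω : Type*} [MeasurableSpace Ω] {P : Measure Ω} [IsProbabilityMeasure P] {R : Ω → ℝ}

lemma one_sub_measureReal_le (hR : Measurable R) (u : ℝ) :
    1 - P.real {ω | R ω ≤ u} = P.real {ω | u < R ω} := by
  rw [← probReal_compl_eq_one_sub (measurableSet_le hR measurable_const)]
  simp only [Set.compl_ofPred, not_le]

lemma measureReal_comp_lt_eq_integral {α : Type*} [MeasurableSpace α] {W : Ω → α} {g : α → ℝ}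
    (hR : Measurable R) (hW : Measurable W) (hg : Measurable g) (hRW : IndepFun R W P) :
    P.real {ω | g (W ω) < R ω} = ∫ w, P.real {ω | g w < R ω} ∂P.map W := by
  have hs : MeasurableSet {x : ℝ × α | g x.2 < x.1} :=
    measurableSet_lt (by fun_prop) (by fun_prop)
  have := Measure.isProbabilityMeasure_map (μ := P) hR.aemeasurable
  have := Measure.isProbabilityMeasure_map (μ := P) hW.aemeasurable
  have hsection (w : α) : P.map R ((fun r => (r, w)) ⁻¹' {x | g x.2 < x.1}) =
      P {ω | g w < R ω} := Measure.map_apply hR (measurable_prodMk_right hs)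
  have hjoint : P {ω | g (W ω) < R ω} = ∫⁻ w, P {ω | g w < R ω} ∂P.map W := calc
    _ = P.map (fun ω => (R ω, W ω)) {x | g x.2 < x.1} := (Measure.map_apply (hR.prodMk hW) hs).symm
    _ = _ := by
      rw [(indepFun_iff_map_prod_eq_prod_map_map hR.aemeasurable hW.aemeasurable).1 hRW,
        Measure.prod_apply_symm hs]
      simp only [hsection]
  have hmeas : Measurable fun w => P {ω | g w < R ω} := by
    simpa only [hsection] using measurable_measure_prodMk_right (μ := P.map R) hs
  simp only [Measure.real]
  rw [hjoint, integral_toReal hmeas.aemeasurable (ae_of_all _ fun w => measure_lt_top P _)]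

variable {E F H : Type*}
  [NormedAddCommGroup E] [InnerProductSpace ℝ E] [FiniteDimensional ℝ E]
  [MeasurableSpace E] [BorelSpace E]
  [NormedAddCommGroup F] [InnerProductSpace ℝ F] [FiniteDimensional ℝ F]
  [MeasurableSpace F] [BorelSpace F] [NormedAddCommGroup H] [NormedSpace ℝ H]

variable {V : Ω → WithLp 2 (E × F)} [Nontrivial E]

theorem measureReal_lt_mul_sqrt_eq_integral (hR : Measurable R) (hV : Measurable V)
    (hRV : IndepFun R V P) (hunif : IsUniformSphereMeasure (P.map V)) (S : F →L[ℝ] H) (u : ℝ) :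
    P.real {ω | u < R ω * √(‖(V ω).fst‖ ^ 2 + ‖S (V ω).snd‖ ^ 2)} =
      ∫ w : F, P.real {ω | u * radialStretch (‖S w‖ ^ 2) (‖w‖ ^ 2) < R ω} *
        studentDensity (Module.finrank ℝ E) w := by
  have := Measure.isProbabilityMeasure_map (μ := P) hV.aemeasurable
  have hevent : {ω | u < R ω * √(‖(V ω).fst‖ ^ 2 + ‖S (V ω).snd‖ ^ 2)} =ᵐ[P]
      {ω | u * radialStretch (‖S (centralProjection (V ω))‖ ^ 2)
        (‖centralProjection (V ω)‖ ^ 2) < R ω} := by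
    filter_upwards [ae_of_ae_map hV.aemeasurable hunif.norm_eq_one,
      ae_of_ae_map hV.aemeasurable hunif.ae_fst_ne_zero] with ω hω hω₁
    exact propext (lt_mul_sqrt_iff_mul_radialStretch_lt S hω hω₁ u (R ω))
  have hlaw : P.map (fun ω => centralProjection (V ω)) =
      volume.withDensity fun w => ENNReal.ofReal (studentDensity (Module.finrank ℝ E) w) := by
    rw [← hunif.map_centralProjection, Measure.map_map measurable_centralProjection hV]
    rfl
  rw [measureReal_congr hevent, measureReal_comp_lt_eq_integral
    (W := fun ω => centralProjection (V ω))
    (g := fun w => u * radialStretch (‖S w‖ ^ 2) (‖w‖ ^ 2)) hR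
    (measurable_centralProjection.comp hV) (by unfold radialStretch; fun_prop)
    (hRV.comp measurable_id measurable_centralProjection), hlaw,
    integral_withDensity_eq_integral_toReal_smul (by unfold studentDensity; fun_prop) (by simp)]
  simp only [ENNReal.toReal_ofReal (studentDensity_pos Module.finrank_pos _).le, smul_eq_mul,
    mul_comm]

variable {c δ τ N : ℝ}

theorem tendsto_measureReal_lt_mul_sqrt (hR : Measurable R) (hV : Measurable V)
    (hRV : IndepFun R V P) (hunif : IsUniformSphereMeasure (P.map V)) {S : F →L[ℝ] H}
    (hS : ‖S‖ < 1) (hc : 0 < c) (hδ : 0 < δ) (hτ : 0 < τ)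
    (hKotz : Tendsto (fun u => P.real {ω | u < R ω} / kotzTail c δ τ N u) atTop (𝓝 1)) :
    Tendsto (fun u => P.real {ω | u < R ω * √(‖(V ω).fst‖ ^ 2 + ‖S (V ω).snd‖ ^ 2)} /
        (kotzTail c δ τ N u * u ^ (-(τ / 2) * Module.finrank ℝ F))) atTop
      (𝓝 (studentConst (Module.finrank ℝ E) (Module.finrank ℝ F) *
        ∫ w : F, Real.exp (-δ * (τ / 2 * (‖w‖ ^ 2 - ‖S w‖ ^ 2))))) := by
  have hanti : Antitone fun v => P.real {ω | v < R ω} := fun v₁ v₂ hv =>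
    measureReal_mono fun ω hω => lt_of_le_of_lt hv hω
  have hdim : (Module.finrank ℝ F : ℝ) < Module.finrank ℝ E + Module.finrank ℝ F :=
    lt_add_of_pos_left _ (mod_cast Module.finrank_pos)
  refine ((tendsto_integral_radialStretch hc hδ hτ hdim hS hanti.measurable hKotz).const_mul
    _).congr fun u => ?_
  rw [measureReal_lt_mul_sqrt_eq_integral hR hV hRV hunif, ← mul_div_assoc, ← integral_const_mul]
  simp only [studentDensity, mul_left_comm]

end Tail

section Diagonal

variable {ι : Type*} [Fintype ι] {a : ι → ℝ}

lemma integral_exp_neg_sum_mul_sq (b : ι → ℝ) :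
    ∫ x : EuclideanSpace ℝ ι, Real.exp (-∑ i, b i * x i ^ 2) = ∏ i, √(Real.pi / b i) := by
  rw [← (PiLp.volume_preserving_toLp ι).integral_comp
    (MeasurableEquiv.toLp 2 (ι → ℝ)).measurableEmbedding]
  simp only [← Finset.sum_neg_distrib, ← neg_mul, Real.exp_sum]
  rw [integral_fintype_prod_volume_eq_prod fun i x => Real.exp (-b i * x ^ 2)]
  simp only [integral_gaussian]

lemma sqrt_pi_div_eq {θ x : ℝ} (hθ : 0 < θ) (hx : 0 < x) :
    √(Real.pi / (θ / 2 * x)) =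
      (Real.pi ^ (1 / 2 : ℝ) * (2 / θ) ^ (1 / 2 : ℝ)) * x ^ (-(1 / 2) : ℝ) := by
  rw [Real.rpow_neg hx.le, ← Real.inv_rpow hx.le, ← Real.mul_rpow Real.pi_pos.le (by positivity),
    ← Real.mul_rpow (by positivity) (by positivity), Real.sqrt_eq_rpow]
  congr 1
  field_simp

section

variable [DecidableEq ι]

/-- The square root of the diagonal quadratic form `x ↦ ∑ i, a i * x i ^ 2`. -/
def sqrtDiagonal (a : ι → ℝ) : EuclideanSpace ℝ ι →L[ℝ] EuclideanSpace ℝ ι :=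
  toEuclideanCLM (𝕜 := ℝ) (diagonal fun i => √(a i))

lemma norm_sqrtDiagonal_apply_sq (ha : ∀ i, 0 ≤ a i) (x : EuclideanSpace ℝ ι) :
    ‖sqrtDiagonal a x‖ ^ 2 = ∑ i, a i * x i ^ 2 := by
  simp only [EuclideanSpace.real_norm_sq_eq, sqrtDiagonal, ofLp_toEuclideanCLM, mulVec_diagonal,
    mul_pow, Real.sq_sqrt (ha _)]

open scoped Matrix.Norms.L2Operator in
lemma norm_sqrtDiagonal_lt_one (ha : ∀ i, a i < 1) : ‖sqrtDiagonal a‖ < 1 := by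
  rw [sqrtDiagonal, l2_opNorm_toEuclideanCLM, l2_opNorm_diagonal, pi_norm_lt_iff one_pos]
  intro i
  rw [Real.norm_of_nonneg (Real.sqrt_nonneg _), Real.sqrt_lt' one_pos, one_pow]
  exact ha i

lemma studentConst_mul_integral_sqrtDiagonal (m : ℕ) {δ τ : ℝ} (hδ : 0 < δ) (hτ : 0 < τ)
    (ha : ∀ i, 0 ≤ a i) (ha1 : ∀ i, a i < 1) :
    studentConst m (Fintype.card ι) *
        ∫ x, Real.exp (-δ * (τ / 2 * (‖x‖ ^ 2 - ‖sqrtDiagonal a x‖ ^ 2))) =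
      Real.Gamma ((m + Fintype.card ι) / 2) / Real.Gamma (m / 2) *
        (2 / (δ * τ)) ^ (Fintype.card ι / 2 : ℝ) * ∏ i, (1 - a i) ^ (-(1 / 2) : ℝ) := by
  have hexp (x : EuclideanSpace ℝ ι) : -δ * (τ / 2 * (‖x‖ ^ 2 - ‖sqrtDiagonal a x‖ ^ 2)) =
      -∑ i, δ * τ / 2 * (1 - a i) * x i ^ 2 := by
    rw [norm_sqrtDiagonal_apply_sq ha, EuclideanSpace.real_norm_sq_eq, ← Finset.sum_sub_distrib,
      Finset.mul_sum, Finset.mul_sum, ← Finset.sum_neg_distrib]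
    exact Finset.sum_congr rfl fun i _ => by ring
  have hθ : 0 < δ * τ := mul_pos hδ hτ
  simp only [hexp, integral_exp_neg_sum_mul_sq, sqrt_pi_div_eq hθ (sub_pos.2 (ha1 _)),
    Finset.prod_mul_distrib, Finset.prod_const, Finset.card_univ,
    ← Real.rpow_mul_natCast Real.pi_pos.le, ← Real.rpow_mul_natCast (div_pos two_pos hθ).le,
    one_div_mul_eq_div, studentConst, Real.rpow_neg Real.pi_pos.le]
  field_simp

end

variable {Ω : Type*} [MeasurableSpace Ω] {P : Measure Ω} [IsProbabilityMeasure P] {R : Ω → ℝ}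
  {E : Type*} [NormedAddCommGroup E] [InnerProductSpace ℝ E] [FiniteDimensional ℝ E]
  [MeasurableSpace E] [BorelSpace E] [Nontrivial E]
  {V : Ω → WithLp 2 (E × EuclideanSpace ℝ ι)} {c δ τ N : ℝ}

theorem tendsto_measureReal_lt_mul_sqrt_diagonal (hR : Measurable R) (hV : Measurable V)
    (hRV : IndepFun R V P) (hunif : IsUniformSphereMeasure (P.map V))
    (ha : ∀ i, 0 ≤ a i) (ha1 : ∀ i, a i < 1) (hc : 0 < c) (hδ : 0 < δ) (hτ : 0 < τ)
    (hKotz : Tendsto (fun u => P.real {ω | u < R ω} / kotzTail c δ τ N u) atTop (𝓝 1)) :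
    Tendsto (fun u => P.real {ω | u < R ω * √(‖(V ω).fst‖ ^ 2 + ∑ i, a i * (V ω).snd i ^ 2)} /
        (kotzTail c δ τ N u * u ^ (-(τ / 2) * Fintype.card ι))) atTop
      (𝓝 (Real.Gamma ((Module.finrank ℝ E + Fintype.card ι) / 2) /
        Real.Gamma (Module.finrank ℝ E / 2) * (2 / (δ * τ)) ^ (Fintype.card ι / 2 : ℝ) *
          ∏ i, (1 - a i) ^ (-(1 / 2) : ℝ))) := by
  classical
  have h := tendsto_measureReal_lt_mul_sqrt hR hV hRV hunif (norm_sqrtDiagonal_lt_one ha1)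
    hc hδ hτ hKotz
  rw [finrank_euclideanSpace, studentConst_mul_integral_sqrtDiagonal _ hδ hτ ha ha1] at h
  simpa only [norm_sqrtDiagonal_apply_sq ha] using h

end Diagonal

section QuadraticForm

variable {n E : Type*} [Fintype n] [NormedAddCommGroup E] [InnerProductSpace ℝ E]

/-- Coordinates in an orthonormal basis, split according to a predicate on the index. -/
def splitRepr (b : OrthonormalBasis n ℝ E) (p : n → Prop) [DecidablePred p] :
    E ≃ₗᵢ[ℝ] WithLp 2 (EuclideanSpace ℝ {i // p i} × EuclideanSpace ℝ {i // ¬p i}) :=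
  (b.reindex (Equiv.sumCompl p).symm).repr.trans (PiLp.sumPiLpEquivProdLpPiLp 2 _)

section

variable (b : OrthonormalBasis n ℝ E) (p : n → Prop) [DecidablePred p] (x : E)

lemma splitRepr_fst_apply (i : {i // p i}) : (splitRepr b p x).fst i = b.repr x i :=
  b.repr_reindex (Equiv.sumCompl p).symm x (.inl i)

lemma splitRepr_snd_apply (i : {i // ¬p i}) : (splitRepr b p x).snd i = b.repr x i :=
  b.repr_reindex (Equiv.sumCompl p).symm x (.inr i)

end

lemma sum_mul_repr_sq_eq_mul_splitRepr (b : OrthonormalBasis n ℝ E) (lam : n → ℝ) {l : ℝ}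
    (hl : l ≠ 0) (x : E) :
    ∑ i, lam i * b.repr x i ^ 2 = l * (‖(splitRepr b (lam · = l) x).fst‖ ^ 2 +
      ∑ i : {i // ¬lam i = l}, lam i / l * (splitRepr b (lam · = l) x).snd i ^ 2) := by
  rw [← Fintype.sum_subtype_add_sum_subtype (lam · = l), EuclideanSpace.real_norm_sq_eq, mul_add,
    Finset.mul_sum, Finset.mul_sum]
  congr 1
  · refine Finset.sum_congr rfl fun i _ => ?_
    rw [splitRepr_fst_apply, i.2]
  · refine Finset.sum_congr rfl fun i _ => ?_
    rw [splitRepr_snd_apply, ← mul_assoc, mul_div_cancel₀ _ hl]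

variable {Ω : Type*} [MeasurableSpace Ω] {P : Measure Ω} [IsProbabilityMeasure P] {R : Ω → ℝ}
  [MeasurableSpace E] [BorelSpace E] {W : Ω → E} {c δ τ N : ℝ}

lemma card_subtype_not_eq_sub (p : n → Prop) [DecidablePred p] :
    (Fintype.card {i // ¬p i} : ℝ) = Fintype.card n - Fintype.card {i // p i} := by
  rw [Fintype.card_subtype_compl, Nat.cast_sub (Fintype.card_subtype_le p)]

lemma prod_one_sub_div_rpow_pos {lam : n → ℝ} {l : ℝ} (hl : 0 < l) (hle : ∀ i, lam i ≤ l)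
    (p : ℝ) : 0 < ∏ i : {i // ¬lam i = l}, (1 - lam i / l) ^ p :=
  Finset.prod_pos fun i _ =>
    Real.rpow_pos_of_pos (sub_pos.2 ((div_lt_one hl).2 ((hle i).lt_of_ne i.2))) p

theorem tendsto_measureReal_lt_mul_sqrt_sum_mul_repr_sq (hR : Measurable R) (hW : Measurable W)
    (hRW : IndepFun R W P) (hunif : IsUniformSphereMeasure (P.map W))
    (b : OrthonormalBasis n ℝ E) {lam : n → ℝ} {l : ℝ} (hl : 0 < l) (hlam : ∀ i, 0 ≤ lam i)
    (hle : ∀ i, lam i ≤ l) [Nonempty {i // lam i = l}]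
    (hc : 0 < c) (hδ : 0 < δ) (hτ : 0 < τ)
    (hKotz : Tendsto (fun u => P.real {ω | u < R ω} / kotzTail c δ τ N u) atTop (𝓝 1)) :
    Tendsto (fun u => P.real {ω | u * √l < R ω * √(∑ i, lam i * b.repr (W ω) i ^ 2)} /
        (kotzTail c δ τ N u * u ^ (-(τ / 2) * Fintype.card {i // ¬lam i = l}))) atTop
      (𝓝 (Real.Gamma (Fintype.card n / 2) / Real.Gamma (Fintype.card {i // lam i = l} / 2) *
        (2 / (δ * τ)) ^ (Fintype.card {i // ¬lam i = l} / 2 : ℝ) *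
          ∏ i : {i // ¬lam i = l}, (1 - lam i / l) ^ (-(1 / 2) : ℝ))) := by
  have hrepr : Measurable (splitRepr b (lam · = l)) :=
    (splitRepr b (lam · = l)).continuous.measurable
  have hlaw : IsUniformSphereMeasure (P.map fun ω => splitRepr b (lam · = l) (W ω)) := by
    have := hunif.map (splitRepr b (lam · = l))
    rwa [Measure.map_map hrepr hW] at this
  have hcard : (Fintype.card n : ℝ) =
      Fintype.card {i // lam i = l} + Fintype.card {i // ¬lam i = l} := by
    rw [card_subtype_not_eq_sub, add_sub_cancel]
  have h := tendsto_measureReal_lt_mul_sqrt_diagonal (a := fun i : {i // ¬lam i = l} => lam i / l)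
    hR (hrepr.comp hW) (hRW.comp measurable_id hrepr) hlaw (fun i => div_nonneg (hlam i) hl.le)
    (fun i => (div_lt_one hl).2 ((hle i).lt_of_ne i.2)) hc hδ hτ hKotz
  rw [finrank_euclideanSpace, ← hcard] at h
  refine h.congr fun u => ?_
  simp only [sum_mul_repr_sq_eq_mul_splitRepr b lam hl.ne', Real.sqrt_mul hl.le,
    mul_left_comm _ √l, mul_comm u √l, mul_lt_mul_iff_right₀ (Real.sqrt_pos.2 hl)]
  rfl

theorem tendsto_measureReal_lt_mul_sqrt_sum_mul_repr_sq_div_kotzTail (hR : Measurable R)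
    (hW : Measurable W) (hRW : IndepFun R W P) (hunif : IsUniformSphereMeasure (P.map W))
    (b : OrthonormalBasis n ℝ E) {lam : n → ℝ} {l : ℝ} (hl : 0 < l) (hlam : ∀ i, 0 ≤ lam i)
    (hle : ∀ i, lam i ≤ l) [Nonempty {i // lam i = l}]
    (hc : 0 < c) (hδ : 0 < δ) (hτ : 0 < τ)
    (hKotz : Tendsto (fun u => P.real {ω | u < R ω} / kotzTail c δ τ N u) atTop (𝓝 1)) :
    Tendsto (fun u => P.real {ω | u * √l < R ω * √(∑ i, lam i * b.repr (W ω) i ^ 2)} /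
        kotzTail (c * (∏ i with lam i ≠ l, (1 - lam i / l) ^ (-(1 / 2) : ℝ)) *
            (Real.Gamma (Fintype.card n / 2) / Real.Gamma (Finset.card {i | lam i = l} / 2)) *
            (2 / (δ * τ)) ^ ((Fintype.card n - Finset.card {i | lam i = l} : ℝ) / 2)) δ τ
          (τ * (Finset.card {i | lam i = l} - Fintype.card n) / 2 + N) u) atTop (𝓝 1) := by
  have hprod : ∏ i with lam i ≠ l, (1 - lam i / l) ^ (-(1 / 2) : ℝ) =
      ∏ i : {i // ¬lam i = l}, (1 - lam i / l) ^ (-(1 / 2) : ℝ) :=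
    Finset.prod_subtype (Finset.univ.filter fun i => lam i ≠ l) (fun i => by simp) _
  have hpos := prod_one_sub_div_rpow_pos hl hle (-(1 / 2))
  have hcard : 0 < Fintype.card {i // lam i = l} := Fintype.card_pos
  have hcard' : 0 < Fintype.card n := hcard.trans_le (Fintype.card_subtype_le _)
  have h := tendsto_div_kotzTail_const_mul_rpow (by positivity)
    (tendsto_measureReal_lt_mul_sqrt_sum_mul_repr_sq hR hW hRW hunif b hl hlam hle hc hδ hτ hKotz)
  rw [hprod, ← Fintype.card_subtype]
  rw [card_subtype_not_eq_sub] at h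
  convert h using 4 <;> ring

end QuadraticForm

section Matrix

variable {n : Type*} [Fintype n] [DecidableEq n]

lemma inner_toEuclideanCLM_self_eq_sum_eigenvalues {B : Matrix n n ℝ} (hB : B.IsHermitian)
    (x : EuclideanSpace ℝ n) :
    ⟪x, toEuclideanCLM (𝕜 := ℝ) B x⟫ =
      ∑ i, hB.eigenvalues i * hB.eigenvectorBasis.repr x i ^ 2 := by
  have hadj : star (toEuclideanCLM (𝕜 := ℝ) B) = toEuclideanCLM (𝕜 := ℝ) B := by
    rw [← map_star, star_eq_conjTranspose, hB.eq]
  have heig (i : n) : toEuclideanCLM (𝕜 := ℝ) B (hB.eigenvectorBasis i) =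
      hB.eigenvalues i • hB.eigenvectorBasis i :=
    congrArg (WithLp.toLp 2) (hB.mulVec_eigenvectorBasis i)
  rw [← hB.eigenvectorBasis.sum_inner_mul_inner]
  refine Finset.sum_congr rfl fun i _ => ?_
  rw [← hadj, ContinuousLinearMap.star_eq_adjoint, ContinuousLinearMap.adjoint_inner_right, heig,
    real_inner_smul_left, OrthonormalBasis.repr_apply_apply, real_inner_comm x]
  ring

lemma exists_orthonormalBasis_norm_toEuclideanCLM_eq (A : Matrix n n ℝ)
    (hH : (A * Aᵀ).IsHermitian) (σ : Equiv.Perm n) :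
    ∃ b : OrthonormalBasis n ℝ (EuclideanSpace ℝ n), ∀ x,
      ‖toEuclideanCLM (𝕜 := ℝ) A x‖ = √(∑ i, hH.eigenvalues (σ i) * b.repr x i ^ 2) := by
  have hB : (Aᵀ * A).IsHermitian := isHermitian_conjTranspose_mul_self A
  refine ⟨hB.eigenvectorBasis.reindex σ.symm, fun x => ?_⟩
  simp only [OrthonormalBasis.repr_reindex, Equiv.symm_symm]
  -- `Aᵀ * A` and `A * Aᵀ` have the same characteristic polynomial
  rw [Equiv.sum_comp σ fun i => hH.eigenvalues i * hB.eigenvectorBasis.repr x i ^ 2,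
    (hH.eigenvalues_eq_eigenvalues_iff hB).2 (charpoly_mul_comm A Aᵀ),
    ← inner_toEuclideanCLM_self_eq_sum_eigenvalues hB, map_mul,
    ← conjTranspose_eq_transpose_of_trivial, ← star_eq_conjTranspose, map_star]
  exact ContinuousLinearMap.apply_norm_eq_sqrt_inner_adjoint_right _ x

lemma exists_mul_transpose_eq_one_toLp_mulVec
    (e : EuclideanSpace ℝ n ≃ₗᵢ[ℝ] EuclideanSpace ℝ n) :
    ∃ D : Matrix n n ℝ, D * Dᵀ = 1 ∧ ∀ x, WithLp.toLp 2 (D *ᵥ x) = e (WithLp.toLp 2 x) := by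
  let b := EuclideanSpace.basisFun n ℝ
  refine ⟨e.toMatrix b.toBasis b.toBasis,
    mem_unitaryGroup_iff.1 (e.toMatrix_mem_unitaryGroup b b), fun x => ?_⟩
  exact congrArg (WithLp.toLp 2)
    (LinearMap.toMatrix_mulVec_repr b.toBasis b.toBasis e.toLinearMap (WithLp.toLp 2 x))

end Matrix

section EuclideanCoordinates

variable {d : ℕ}

lemma eNorm_eq_norm_toLp (x : Fin d → ℝ) : eNorm x = ‖WithLp.toLp 2 x‖ := by
  simp [eNorm, EuclideanSpace.norm_eq]

lemma eNorm_mulVec_smul (A : Matrix (Fin d) (Fin d) ℝ) {r : ℝ} (hr : 0 ≤ r) (x : Fin d → ℝ) :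
    eNorm (A *ᵥ (r • x)) = r * ‖toEuclideanCLM (𝕜 := ℝ) A (WithLp.toLp 2 x)‖ := by
  rw [toEuclideanCLM_toLp, mulVec_smul, eNorm_eq_norm_toLp, WithLp.toLp_smul, norm_smul,
    Real.norm_of_nonneg hr]

lemma IsUniformOnSphere.isUniformSphereMeasure {Ω : Type*} [MeasurableSpace Ω] {P : Measure Ω}
    {U : Ω → Fin d → ℝ} (hU : IsUniformOnSphere P U) :
    IsUniformSphereMeasure (P.map fun ω => WithLp.toLp 2 (U ω)) := by
  obtain ⟨hUm, hnorm, hinv⟩ := hU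
  have htoLp := WithLp.measurable_toLp 2 (Fin d → ℝ)
  have hW : Measurable fun ω => WithLp.toLp 2 (U ω) := htoLp.comp hUm
  refine ⟨?_, fun e => ?_⟩
  · rw [ae_map_iff hW.aemeasurable (measurableSet_eq_fun (by fun_prop) (by fun_prop))]
    exact ae_of_all _ fun ω => (eNorm_eq_norm_toLp _).symm.trans (hnorm ω)
  · obtain ⟨D, hD, hDe⟩ := exists_mul_transpose_eq_one_toLp_mulVec e
    have hDU : Measurable fun ω => D *ᵥ U ω :=
      (continuous_const.matrix_mulVec continuous_id).measurable.comp hUm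
    calc (P.map fun ω => WithLp.toLp 2 (U ω)).map e
        = (P.map fun ω => D *ᵥ U ω).map (WithLp.toLp 2) := by
          rw [Measure.map_map e.continuous.measurable hW, Measure.map_map htoLp hDU]
          exact congrArg (P.map ·) (funext fun ω => (hDe (U ω)).symm)
      _ = P.map fun ω => WithLp.toLp 2 (U ω) := by
          rw [hinv D hD, Measure.map_map htoLp hUm]
          rfl

end EuclideanCoordinates

/-- Tail asymptotics (14) for Kotz Type III elliptical random vectors. -/
theorem norm_kotz_iii_tail
    {Ω : Type*} [MeasurableSpace Ω] (P : Measure Ω) [IsProbabilityMeasure P]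
    (d : ℕ) [NeZero d] (hd : 2 ≤ d)
    (A : Matrix (Fin d) (Fin d) ℝ)
    (R : Ω → ℝ) (U : Ω → Fin d → ℝ)
    (hRmeas : Measurable R) (hRpos : ∀ ω, 0 < R ω)
    (hU : IsUniformOnSphere P U)
    (hInd : IndepFun R U P)
    (X : Ω → Fin d → ℝ) (hX : ∀ ω, X ω = A.mulVec (R ω • U ω))
    -- `F` is the distribution function of `R`
    (F : ℝ → ℝ) (hF : ∀ u, F u = (P {ω | R ω ≤ u}).toReal) (hF0 : F 0 = 0)
    -- `lam` enumerates the eigenvalues of `Σ = A Aᵀ` in decreasing order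
    (lam : Fin d → ℝ) (hmono : Antitone lam)
    (hlam : ∃ (hH : (A * Aᵀ).IsHermitian) (σ : Equiv.Perm (Fin d)),
      ∀ i, lam i = hH.eigenvalues (σ i))
    (hlam0 : 0 < lam 0)
    -- `m` is the multiplicity of the largest eigenvalue `lam 0 = λ_(m)`
    (m : ℕ) (hm : m = (Finset.univ.filter fun j => lam j = lam 0).card)
    (Cstar : ℝ)
    (hC : Cstar = ∏ j ∈ Finset.univ.filter (fun j => lam j ≠ lam 0),
      ((1 : ℝ) - lam j / lam 0) ^ (-(1 / 2 : ℝ)))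
    -- Kotz Type III tail:  1 - F(u) = (1+o(1)) c u^N exp(-δ u^τ),  u → ∞
    (c δ τ N : ℝ) (hc : 0 < c) (hδ : 0 < δ) (hτ : 0 < τ)
    (hKotz : Tendsto (fun u : ℝ =>
      (1 - F u) / (c * u ^ N * Real.exp (-δ * u ^ τ))) atTop (𝓝 1))
 :
    Tendsto (fun u =>
        (P {ω | eNorm (X ω) > u * Real.sqrt (lam 0)}).toReal /
          (c * Cstar * (Real.Gamma ((d : ℝ) / 2) / Real.Gamma ((m : ℝ) / 2)) *
            (2 / (δ * τ)) ^ (((d : ℝ) - (m : ℝ)) / 2) *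
            u ^ (τ * ((m : ℝ) - (d : ℝ)) / 2 + N) * Real.exp (-δ * u ^ τ)))
      atTop (𝓝 1) := by
  obtain ⟨hH, σ, hσ⟩ := hlam
  obtain ⟨b, hb⟩ := exists_orthonormalBasis_norm_toEuclideanCLM_eq A hH σ
  have hnorm (ω : Ω) :
      eNorm (X ω) = R ω * √(∑ i, lam i * b.repr (WithLp.toLp 2 (U ω)) i ^ 2) := by
    simp only [hX, eNorm_mulVec_smul A (hRpos ω).le, hb, hσ]
  have hlam_nonneg (i : Fin d) : 0 ≤ lam i :=
    hσ i ▸ (posSemidef_self_mul_conjTranspose A).eigenvalues_nonneg _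
  have hlam_le (i : Fin d) : lam i ≤ lam 0 := hmono (Fin.zero_le i)
  have hRtail : Tendsto (fun u => P.real {ω | u < R ω} / kotzTail c δ τ N u) atTop (𝓝 1) := by
    simpa only [← one_sub_measureReal_le hRmeas, kotzTail, measureReal_def, ← hF] using hKotz
  have : Nonempty {i // lam i = lam 0} := ⟨0, rfl⟩
  have htoLp := WithLp.measurable_toLp 2 (Fin d → ℝ)
  have hlim := tendsto_measureReal_lt_mul_sqrt_sum_mul_repr_sq_div_kotzTail hRmeas
    (htoLp.comp hU.1) (hInd.comp measurable_id htoLp) hU.isUniformSphereMeasure b hlam0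
    hlam_nonneg hlam_le hc hδ hτ hRtail
  simpa only [hnorm, hm, hC, Fintype.card_fin] using! hlim
end
end
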